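/- arXiv:1006.4167 — 7 statements merged into one kernel-verified Lean document; each statement's English description precedes it below -/
import Mathlib

section
/- Let H₁, H₂, H₃ be complex Hilbert spaces and let T₁ : H₁ → H₂ and T₂ : H₂ → H₃ be densely defined, closed linear operators with range(T₁) ⊆ ker(T₂). Then dom(T₁*) ∩ dom(T₂) is dense in H₂. -/
open scoped LinearPMap InnerProductSpace

/-!
Let `N` be the closure of `range T₁`; it lies in `ker T₂ ⊆ dom T₂`, and `Nᗮ ⊆ dom T₁*` because
`⟪y, T₁ x⟫ = 0` for `y ∈ Nᗮ`. Let `P` be the orthogonal projection onto `N`. Then `P` sends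
`dom T₁*` into `dom T₁* ∩ dom T₂`, since `P y = y - (y - P y)`, and likewise `1 - P` sends `dom T₂`
into `dom T₁* ∩ dom T₂`. As `dom T₁*` and `dom T₂` are dense, both `P x` and `x - P x` are limits of
points of the intersection, for every `x`.

The density of `dom T₁*` comes from the double adjoint of the graph: if `z ⊥ dom T₁*`, then `(0, z)`
lies in the double adjoint, which is the closure of the graph, so `z = 0`.
-/

section DenseIntersection

theorem dense_inf_of_mem_of_sub_mem {G : Type*} [AddGroup G] [TopologicalSpace G]
    [IsTopologicalAddGroup G] {A B : AddSubgroup G} (hA : Dense (A : Set G))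
    (hB : Dense (B : Set G)) {p : G → G} (hp : Continuous p) (hpB : ∀ x, p x ∈ B)
    (hpA : ∀ x, x - p x ∈ A) : Dense ((A ⊓ B : AddSubgroup G) : Set G) := by
  have p_mapsTo : Set.MapsTo p A (A ⊓ B : AddSubgroup G) := fun a ha ↦
    ⟨by simpa using A.add_mem (A.neg_mem (hpA a)) ha, hpB a⟩
  have sub_mapsTo : Set.MapsTo (fun x ↦ x - p x) B (A ⊓ B : AddSubgroup G) := fun b hb ↦
    ⟨hpA b, B.sub_mem hb (hpB b)⟩
  intro x
  have p_mem := map_mem_closure hp (hA x) p_mapsTo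
  have sub_mem := map_mem_closure (by fun_prop) (hB x) sub_mapsTo
  rw [← sub_add_cancel x (p x)]
  exact (A ⊓ B).topologicalClosure.add_mem sub_mem p_mem

variable {𝕜 E : Type*} [RCLike 𝕜] [NormedAddCommGroup E] [InnerProductSpace 𝕜 E]

theorem dense_inf_of_orthogonal_le_of_le {A B : Submodule 𝕜 E} (hA : Dense (A : Set E))
    (hB : Dense (B : Set E)) (N : Submodule 𝕜 E) [N.HasOrthogonalProjection]
    (hNA : Nᗮ ≤ A) (hNB : N ≤ B) : Dense ((A ⊓ B : Submodule 𝕜 E) : Set E) :=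
  dense_inf_of_mem_of_sub_mem (A := A.toAddSubgroup) (B := B.toAddSubgroup) hA hB
    N.starProjection.continuous (fun x ↦ hNB (N.starProjection_apply_mem x))
    (fun x ↦ hNA (N.sub_starProjection_mem_orthogonal x))

end DenseIntersection

theorem isClosed_map_subtype_ker {R E F : Type*} [CommRing R] [AddCommGroup E] [AddCommGroup F]
    [Module R E] [Module R F] [TopologicalSpace E] [TopologicalSpace F] {T : E →ₗ.[R] F}
    (hT : T.IsClosed) :
    IsClosed ((LinearMap.ker T.toFun).map T.domain.subtype : Set E) := by
  have ker_eq_preimage : ((LinearMap.ker T.toFun).map T.domain.subtype : Set E) =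
      (fun x ↦ (x, (0 : F))) ⁻¹' T.graph := by
    ext x
    simp
  rw [ker_eq_preimage]
  exact IsClosed.preimage (by fun_prop) hT

theorem toLp_mem_topologicalClosure_comap_iff {𝕜 E F : Type*} [NormedField 𝕜]
    [SeminormedAddCommGroup E] [SeminormedAddCommGroup F] [NormedSpace 𝕜 E] [NormedSpace 𝕜 F]
    (p : ENNReal) [Fact (1 ≤ p)] (g : Submodule 𝕜 (E × F)) (x : E × F) :
    WithLp.toLp p x ∈ (g.comap (WithLp.linearEquiv p 𝕜 (E × F)).toLinearMap).topologicalClosure ↔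
      x ∈ g.topologicalClosure :=
  (Set.ext_iff.mp ((WithLp.prodContinuousLinearEquiv p 𝕜 E F).preimage_closure g)
    (WithLp.toLp p x)).symm

section Adjoint

variable {𝕜 E F : Type*} [RCLike 𝕜]
  [NormedAddCommGroup E] [InnerProductSpace 𝕜 E]
  [NormedAddCommGroup F] [InnerProductSpace 𝕜 F]

theorem mk_neg_mem_adjoint_iff_toLp_mem_orthogonal (g : Submodule 𝕜 (E × F)) (y : F) (w : E) :
    (y, -w) ∈ g.adjoint ↔
      WithLp.toLp 2 (w, y) ∈ (g.comap (WithLp.linearEquiv 2 𝕜 (E × F)).toLinearMap)ᗮ := by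
  have inner_eq (a : E) (b : F) :
      ⟪WithLp.toLp 2 (a, b), WithLp.toLp 2 (w, y)⟫_𝕜 = ⟪b, y⟫_𝕜 - ⟪a, -w⟫_𝕜 := by
    rw [WithLp.prod_inner_apply, inner_neg_right, sub_neg_eq_add, add_comm]
  simp only [Submodule.mem_adjoint_iff, Submodule.mem_orthogonal, ← inner_eq]
  exact ⟨fun h u hu ↦ h u.fst u.snd hu, fun h a b hab ↦ h (WithLp.toLp 2 (a, b)) hab⟩

theorem adjoint_adjoint_eq_topologicalClosure [CompleteSpace E] [CompleteSpace F]
    (g : Submodule 𝕜 (E × F)) : g.adjoint.adjoint = g.topologicalClosure := by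
  ext ⟨x, z⟩
  rw [← toLp_mem_topologicalClosure_comap_iff 2, ← Submodule.orthogonal_orthogonal_eq_closure,
    Submodule.mem_adjoint_iff, Submodule.mem_orthogonal]
  have inner_eq (y : F) (w : E) :
      ⟪WithLp.toLp 2 (w, y), WithLp.toLp 2 (x, z)⟫_𝕜 = -(⟪-w, x⟫_𝕜 - ⟪y, z⟫_𝕜) := by
    rw [WithLp.prod_inner_apply, inner_neg_left, neg_sub, sub_neg_eq_add, add_comm]
  constructor
  · intro h u hu
    have pairing_eq_zero :=
      h u.snd (-u.fst) ((mk_neg_mem_adjoint_iff_toLp_mem_orthogonal g u.snd u.fst).mpr hu)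
    exact (inner_eq u.snd u.fst).trans (neg_eq_zero.mpr pairing_eq_zero)
  · intro h y w hyw
    rw [← neg_neg w] at hyw ⊢
    rw [← neg_eq_zero, ← inner_eq]
    exact h _ ((mk_neg_mem_adjoint_iff_toLp_mem_orthogonal g y (-w)).mp hyw)

variable [CompleteSpace E] (T : E →ₗ.[𝕜] F)

theorem orthogonal_range_le_adjoint_domain : (LinearMap.range T.toFun)ᗮ ≤ T†.domain := by
  intro y hy
  refine LinearPMap.mem_adjoint_domain_of_exists y ⟨0, fun x ↦ ?_⟩
  rw [inner_zero_left]
  exact (Submodule.inner_left_of_mem_orthogonal (LinearMap.mem_range_self T.toFun x) hy).symm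

theorem mem_adjoint_domain_of_mk_mem_graph_adjoint {y : F} {w : E}
    (h : (y, w) ∈ T.graph.adjoint) : y ∈ T†.domain := by
  rw [Submodule.mem_adjoint_iff] at h
  refine LinearPMap.mem_adjoint_domain_of_exists y ⟨w, fun x ↦ ?_⟩
  rw [← inner_conj_symm, ← sub_eq_zero.mp (h x (T x) (T.mem_graph x)), inner_conj_symm]

variable {T}

theorem dense_adjoint_domain_of_isClosable [CompleteSpace F] (hT : T.IsClosable) :
    Dense (T†.domain : Set F) := by
  rw [Submodule.dense_iff_topologicalClosure_eq_top, Submodule.topologicalClosure_eq_top_iff,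
    Submodule.eq_bot_iff]
  intro z hz
  have mem_adjoint_adjoint : ((0 : E), z) ∈ T.graph.adjoint.adjoint := by
    rw [Submodule.mem_adjoint_iff]
    intro y w hyw
    have hy := mem_adjoint_domain_of_mk_mem_graph_adjoint T hyw
    rw [inner_zero_right, Submodule.inner_right_of_mem_orthogonal hy hz, sub_zero]
  rw [adjoint_adjoint_eq_topologicalClosure, hT.graph_closure_eq_closure_graph]
    at mem_adjoint_adjoint
  exact T.closure.graph_fst_eq_zero_snd mem_adjoint_adjoint rfl

theorem dense_adjointDomain_inf_domain_general [CompleteSpace F] (hT : T.IsClosable)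
    {D : Submodule 𝕜 F} (hD : Dense (D : Set F))
    (hrange : (LinearMap.range T.toFun).topologicalClosure ≤ D) :
    Dense ((T†.domain ⊓ D : Submodule 𝕜 F) : Set F) := by
  refine dense_inf_of_orthogonal_le_of_le (dense_adjoint_domain_of_isClosable hT) hD
    (LinearMap.range T.toFun).topologicalClosure ?_ hrange
  rw [Submodule.orthogonal_closure]
  exact orthogonal_range_le_adjoint_domain T

end Adjoint

/-- Let `H₁, H₂, H₃` be complex Hilbert spaces and `T₁ : H₁ → H₂`,
`T₂ : H₂ → H₃` densely defined, closed linear operators with `range T₁ ⊆ ker T₂`.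
Then `dom T₁* ∩ dom T₂` is dense in `H₂`. -/
theorem dense_adjointDomain_inf_domain
    {H₁ H₂ H₃ : Type*}
    [NormedAddCommGroup H₁] [InnerProductSpace ℂ H₁] [CompleteSpace H₁]
    [NormedAddCommGroup H₂] [InnerProductSpace ℂ H₂] [CompleteSpace H₂]
    [NormedAddCommGroup H₃] [InnerProductSpace ℂ H₃] [CompleteSpace H₃]
    (T₁ : H₁ →ₗ.[ℂ] H₂) (T₂ : H₂ →ₗ.[ℂ] H₃)
    (hd₁ : Dense (T₁.domain : Set H₁)) (hd₂ : Dense (T₂.domain : Set H₂))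
    (hc₁ : T₁.IsClosed) (hc₂ : T₂.IsClosed)
    (hrange : LinearMap.range T₁.toFun ≤
      (LinearMap.ker T₂.toFun).map T₂.domain.subtype) :
    Dense ((T₁.adjoint.domain ⊓ T₂.domain : Submodule ℂ H₂) : Set H₂) := by
  have closure_range_le_ker :=
    Submodule.topologicalClosure_minimal _ hrange (isClosed_map_subtype_ker hc₂)
  exact dense_adjointDomain_inf_domain_general hc₁.isClosable hd₂
    (closure_range_le_ker.trans (Submodule.map_subtype_le _ _))
end

section
/- Let H₁, H₂, H₃ be complex Hilbert spaces and let T₁ : H₁ → H₂ and T₂ : H₂ → H₃ be densely defined, closed linear operators with range(T₁) ⊆ ker(T₂). Define the operator □ on H₂ by dom(□) = {f ∈ dom(T₁*) ∩ dom(T₂) : T₁*f ∈ dom(T₁) and T₂f ∈ dom(T₂*)} and □f = T₁T₁*f + T₂*T₂f. Then □ is self-adjoint (□ is densely defined and equals its own adjoint) and non-negative: ⟨□f, f⟩ = ‖T₁*f‖² + ‖T₂f‖² ≥ 0 for all f ∈ dom(□). -/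
open scoped LinearPMap InnerProductSpace

/-- The graph relation of the Laplacian `□ = T₁T₁* + T₂*T₂`:
`boxGraph T₁ T₂ f g` holds iff `f ∈ dom □` (i.e. `f ∈ dom T₁* ∩ dom T₂`,
`T₁* f ∈ dom T₁` and `T₂ f ∈ dom T₂*`) and `g = □ f = T₁ T₁* f + T₂* T₂ f`. -/
def boxGraph
    {H₁ H₂ H₃ : Type*}
    [NormedAddCommGroup H₁] [InnerProductSpace ℂ H₁] [CompleteSpace H₁]
    [NormedAddCommGroup H₂] [InnerProductSpace ℂ H₂] [CompleteSpace H₂]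
    [NormedAddCommGroup H₃] [InnerProductSpace ℂ H₃] [CompleteSpace H₃]
    (T₁ : H₁ →ₗ.[ℂ] H₂) (T₂ : H₂ →ₗ.[ℂ] H₃) (f g : H₂) : Prop :=
  ∃ (h₁ : f ∈ T₁.adjoint.domain) (h₂ : f ∈ T₂.domain)
    (h₃ : T₁.adjoint ⟨f, h₁⟩ ∈ T₁.domain) (h₄ : T₂ ⟨f, h₂⟩ ∈ T₂.adjoint.domain),
    g = T₁ ⟨T₁.adjoint ⟨f, h₁⟩, h₃⟩ + T₂.adjoint ⟨T₂ ⟨f, h₂⟩, h₄⟩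

/-!
The operator `□` is visibly symmetric, so it is self-adjoint as soon as `1 + □` is onto. By von
Neumann, the orthogonal decomposition of the product space along the graph of a closed operator
makes `1 + T₂*T₂` and `1 + T₁T₁*` onto. Solve `x + T₂*T₂x = h` and `y + T₁T₁*y = h`. Since
`T₂T₁ = 0` and `T₁*T₂* = 0`, the vector `h - y = T₁T₁*y` is killed by `T₂` and `h - x = T₂*T₂x` is
killed by `T₁*`, so `f = x + y - h` satisfies `□f = (h - y) + (h - x)`, that is, `f + □f = h`.
-/

section Algebra

variable {R E F G : Type*} [Ring R] [AddCommGroup E] [Module R E] [AddCommGroup F] [Module R F]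
  [AddCommGroup G] [Module R G]

/-- The composition `g ∘ f` of partially defined operators on its maximal domain
`{x ∈ dom f : f x ∈ dom g}`, whereas `LinearPMap.comp` requires `f` to map into `dom g`. -/
def naturalComp (g : F →ₗ.[R] G) (f : E →ₗ.[R] F) : E →ₗ.[R] G :=
  g.comp (f.domRestrict ((g.domain.comap f.toFun).map f.domain.subtype)) <| by
    rintro ⟨_, ⟨x, hx, rfl⟩, -⟩
    exact hx

lemma mem_graph_naturalComp_iff {g : F →ₗ.[R] G} {f : E →ₗ.[R] F} {x : E} {z : G} :
    (x, z) ∈ (naturalComp g f).graph ↔ ∃ y, (x, y) ∈ f.graph ∧ (y, z) ∈ g.graph := by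
  simp only [LinearPMap.mem_graph_iff]
  constructor
  · rintro ⟨⟨_, ⟨x, hx, rfl⟩, -⟩, rfl, rfl⟩
    exact ⟨f x, ⟨x, rfl, rfl⟩, ⟨f x, hx⟩, rfl, rfl⟩
  · rintro ⟨_, ⟨x, rfl, rfl⟩, ⟨y, hy⟩, rfl, rfl⟩
    exact ⟨⟨x, ⟨x, hy, rfl⟩, x.2⟩, rfl, rfl⟩

lemma mem_graph_add_iff {f g : E →ₗ.[R] F} {x : E} {z : F} :
    (x, z) ∈ (f + g).graph ↔ ∃ a b, (x, a) ∈ f.graph ∧ (x, b) ∈ g.graph ∧ z = a + b := by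
  simp only [LinearPMap.mem_graph_iff]
  constructor
  · rintro ⟨⟨x, hf, hg⟩, rfl, rfl⟩
    exact ⟨_, _, ⟨⟨x, hf⟩, rfl, rfl⟩, ⟨⟨x, hg⟩, rfl, rfl⟩, rfl⟩
  · rintro ⟨_, _, ⟨⟨_, hf⟩, rfl, rfl⟩, ⟨⟨x, hg⟩, rfl, rfl⟩, rfl⟩
    exact ⟨⟨x, hf, hg⟩, rfl, rfl⟩

lemma mem_graph_zero_of_range_le_ker {f : E →ₗ.[R] F} {g : F →ₗ.[R] G}
    (h : LinearMap.range f.toFun ≤ (LinearMap.ker g.toFun).map g.domain.subtype)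
    {x : E} {y : F} (hxy : (x, y) ∈ f.graph) : (y, 0) ∈ g.graph := by
  obtain ⟨u, -, rfl⟩ := f.mem_graph_iff.mp hxy
  obtain ⟨v, hv, hvu⟩ := h ⟨u, rfl⟩
  exact g.mem_graph_iff.mpr ⟨v, hvu, hv⟩

end Algebra

section FormalAdjoint

variable {𝕜 E F G : Type*} [RCLike 𝕜]
  [NormedAddCommGroup E] [InnerProductSpace 𝕜 E]
  [NormedAddCommGroup F] [InnerProductSpace 𝕜 F]
  [NormedAddCommGroup G] [InnerProductSpace 𝕜 G]

lemma isFormalAdjoint_iff_graph {T : E →ₗ.[𝕜] F} {S : F →ₗ.[𝕜] E} :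
    T.IsFormalAdjoint S ↔
      ∀ x u y v, (x, u) ∈ T.graph → (y, v) ∈ S.graph → ⟪u, y⟫_𝕜 = ⟪x, v⟫_𝕜 := by
  refine ⟨fun h x u y v hxu hyv => ?_, fun h x y => h _ _ _ _ (T.mem_graph x) (S.mem_graph y)⟩
  obtain ⟨x, rfl, rfl⟩ := T.mem_graph_iff.mp hxu
  obtain ⟨y, rfl, rfl⟩ := S.mem_graph_iff.mp hyv
  exact h x y

lemma isFormalAdjoint_add {T T' : E →ₗ.[𝕜] F} {S S' : F →ₗ.[𝕜] E} (h : T.IsFormalAdjoint S)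
    (h' : T'.IsFormalAdjoint S') : (T + T').IsFormalAdjoint (S + S') := fun x y => by
  rw [LinearPMap.add_apply, LinearPMap.add_apply, inner_add_left, inner_add_right]
  exact congrArg₂ (· + ·) (h ⟨x, x.2.1⟩ ⟨y, y.2.1⟩) (h' ⟨x, x.2.2⟩ ⟨y, y.2.2⟩)

lemma isFormalAdjoint_naturalComp {T : E →ₗ.[𝕜] F} {S : F →ₗ.[𝕜] E} {T' : F →ₗ.[𝕜] G}
    {S' : G →ₗ.[𝕜] F} (h : T.IsFormalAdjoint S) (h' : T'.IsFormalAdjoint S') :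
    (naturalComp T' T).IsFormalAdjoint (naturalComp S S') := by
  rw [isFormalAdjoint_iff_graph] at h h' ⊢
  intro x z y w hxz hyw
  obtain ⟨u, hxu, huz⟩ := mem_graph_naturalComp_iff.mp hxz
  obtain ⟨v, hyv, hvw⟩ := mem_graph_naturalComp_iff.mp hyw
  exact (h' u z y v huz hyv).trans (h x u v w hxu hvw)

lemma inner_apply_add_smul_left {T S : E →ₗ.[𝕜] E} (h : T.IsFormalAdjoint S) (c : 𝕜)
    (x : T.domain) (y : S.domain) :
    ⟪T x + c • (x : E), y⟫_𝕜 = ⟪(x : E), S y + starRingEnd 𝕜 c • (y : E)⟫_𝕜 := by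
  rw [inner_add_left, inner_add_right, inner_smul_left, inner_smul_right, h]

end FormalAdjoint

section SelfAdjoint

variable {𝕜 E : Type*} [RCLike 𝕜] [NormedAddCommGroup E] [InnerProductSpace 𝕜 E] [CompleteSpace E]
  {A : E →ₗ.[𝕜] E}

lemma mem_graph_iff_of_isSelfAdjoint (hA : IsSelfAdjoint A) {v w : E} :
    (v, w) ∈ A.graph ↔ ∀ f g, (f, g) ∈ A.graph → ⟪v, g⟫_𝕜 = ⟪w, f⟫_𝕜 := by
  conv_lhs => rw [← LinearPMap.isSelfAdjoint_def.mp hA,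
    LinearPMap.adjoint_graph_eq_graph_adjoint hA.dense_domain, Submodule.mem_adjoint_iff]
  refine forall₃_congr fun f g _ => ?_
  rw [sub_eq_zero, ← inner_conj_symm, ← inner_conj_symm f, (starRingEnd 𝕜).injective.eq_iff]

lemma dense_domain_of_surjective_add_smul (hsymm : A.IsFormalAdjoint A) {c : 𝕜}
    (hc : ∀ h, ∃ f : A.domain, A f + c • (f : E) = h)
    (hc' : ∀ h, ∃ f : A.domain, A f + starRingEnd 𝕜 c • (f : E) = h) :
    Dense (A.domain : Set E) := by
  rw [Submodule.dense_iff_topologicalClosure_eq_top, Submodule.topologicalClosure_eq_top_iff,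
    Submodule.eq_bot_iff]
  intro h hh
  obtain ⟨f, rfl⟩ := hc h
  obtain ⟨u, hu⟩ := hc' f
  have hff : ⟪(f : E), f⟫_𝕜 = 0 := by
    rw [← Submodule.inner_left_of_mem_orthogonal u.2 hh, inner_apply_add_smul_left hsymm, hu]
  have hf : f = 0 := Subtype.ext (inner_self_eq_zero.mp hff)
  rw [hf, LinearPMap.map_zero, Submodule.coe_zero, smul_zero, add_zero]

theorem isSelfAdjoint_of_surjective_add_smul (hsymm : A.IsFormalAdjoint A) {c : 𝕜}
    (hc : ∀ h, ∃ f : A.domain, A f + c • (f : E) = h)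
    (hc' : ∀ h, ∃ f : A.domain, A f + starRingEnd 𝕜 c • (f : E) = h) :
    IsSelfAdjoint A := by
  have hd := dense_domain_of_surjective_add_smul hsymm hc hc'
  have hle : A ≤ A† := hsymm.le_adjoint hd
  refine LinearPMap.isSelfAdjoint_def.mpr (le_antisymm (LinearPMap.le_of_le_graph ?_) hle)
  rintro ⟨v, w⟩ hvw
  obtain ⟨v, rfl, rfl⟩ := A†.mem_graph_iff.mp hvw
  obtain ⟨f, hf⟩ := hc (A† v + c • (v : E))
  obtain ⟨u, hu⟩ := hc' (v - f)
  have horth : ⟪(v : E) - f, (v : E) - f⟫_𝕜 = 0 := by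
    nth_rw 2 [← hu]
    rw [inner_sub_left, ← inner_apply_add_smul_left (LinearPMap.adjoint_isFormalAdjoint hd),
      ← inner_apply_add_smul_left hsymm, hf, sub_self]
  have hvf : (v : E) = f := sub_eq_zero.mp (inner_self_eq_zero.mp horth)
  rw [hvf] at hf ⊢
  rw [← add_right_cancel hf]
  exact A.mem_graph f

end SelfAdjoint

section Closed

variable {𝕜 E F : Type*} [RCLike 𝕜]
  [NormedAddCommGroup E] [InnerProductSpace 𝕜 E] [CompleteSpace E]
  [NormedAddCommGroup F] [InnerProductSpace 𝕜 F] [CompleteSpace F]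

lemma exists_mem_sub_mem_adjoint {g : Submodule 𝕜 (E × F)} (hg : IsClosed (g : Set (E × F)))
    (a : E) (b : F) : ∃ x u, (x, u) ∈ g ∧ (b - u, x - a) ∈ g.adjoint := by
  let K : Submodule 𝕜 (WithLp 2 (E × F)) := g.comap (WithLp.linearEquiv 2 𝕜 (E × F)).toLinearMap
  have hK : IsClosed (K : Set (WithLp 2 (E × F))) := hg.preimage (WithLp.prod_continuous_ofLp 2 E F)
  have : CompleteSpace K := hK.completeSpace_coe
  obtain ⟨p, hp, q, hq, hpq⟩ := K.exists_add_mem_mem_orthogonal (WithLp.toLp 2 (a, b))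
  have ha : a = p.fst + q.fst := congrArg (·.fst) hpq
  have hb : b = p.snd + q.snd := congrArg (·.snd) hpq
  refine ⟨p.fst, p.snd, hp, (g.mem_adjoint_iff _).mpr fun x u hxu => ?_⟩
  have horth := (K.mem_orthogonal q).mp hq (WithLp.toLp 2 (x, u)) hxu
  rw [WithLp.prod_inner_apply, add_comm] at horth
  rw [ha, hb, add_sub_cancel_left, sub_add_cancel_left, inner_neg_right, sub_neg_eq_add]
  exact horth

variable {T : E →ₗ.[𝕜] F}

lemma exists_mem_graph_mem_graph_adjoint (hd : Dense (T.domain : Set E)) (hc : T.IsClosed) (h : E) :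
    ∃ x u, (x, u) ∈ T.graph ∧ (u, h - x) ∈ T†.graph := by
  obtain ⟨x, u, hxu, hu⟩ := exists_mem_sub_mem_adjoint hc h 0
  rw [← LinearPMap.adjoint_graph_eq_graph_adjoint hd] at hu
  exact ⟨x, u, hxu, by simpa using neg_mem hu⟩

lemma exists_mem_graph_adjoint_mem_graph (hd : Dense (T.domain : Set E)) (hc : T.IsClosed) (h : F) :
    ∃ y v, (y, v) ∈ T†.graph ∧ (v, h - y) ∈ T.graph := by
  obtain ⟨v, u, hvu, hv⟩ := exists_mem_sub_mem_adjoint hc 0 h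
  rw [← LinearPMap.adjoint_graph_eq_graph_adjoint hd] at hv
  exact ⟨h - u, v, by simpa using hv, by simpa using hvu⟩

end Closed

section Laplacian

variable {𝕜 H₁ H₂ H₃ : Type*} [RCLike 𝕜]
  [NormedAddCommGroup H₁] [InnerProductSpace 𝕜 H₁] [CompleteSpace H₁]
  [NormedAddCommGroup H₂] [InnerProductSpace 𝕜 H₂] [CompleteSpace H₂]
  [NormedAddCommGroup H₃] [InnerProductSpace 𝕜 H₃]
  {T₁ : H₁ →ₗ.[𝕜] H₂} {T₂ : H₂ →ₗ.[𝕜] H₃}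

lemma mem_graph_adjoint_zero (hd₁ : Dense (T₁.domain : Set H₁)) (hd₂ : Dense (T₂.domain : Set H₂))
    (hT : ∀ x y, (x, y) ∈ T₁.graph → (y, 0) ∈ T₂.graph) {u : H₃} {v : H₂}
    (huv : (u, v) ∈ T₂†.graph) : (v, 0) ∈ T₁†.graph := by
  rw [LinearPMap.adjoint_graph_eq_graph_adjoint hd₂, Submodule.mem_adjoint_iff] at huv
  rw [LinearPMap.adjoint_graph_eq_graph_adjoint hd₁, Submodule.mem_adjoint_iff]
  intro x y hxy
  simpa using huv y 0 (hT x y hxy)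

/-- The Laplacian `□ = T₁T₁* + T₂*T₂` of unbounded operators `H₁ → H₂ → H₃`, defined on its
maximal domain `dom (T₁T₁*) ∩ dom (T₂*T₂)`. -/
noncomputable def hodgeLaplacian (T₁ : H₁ →ₗ.[𝕜] H₂) (T₂ : H₂ →ₗ.[𝕜] H₃) : H₂ →ₗ.[𝕜] H₂ :=
  naturalComp T₁ T₁† + naturalComp T₂† T₂

lemma mem_graph_hodgeLaplacian_iff {f g : H₂} :
    (f, g) ∈ (hodgeLaplacian T₁ T₂).graph ↔
      ∃ u v a b, (f, u) ∈ T₁†.graph ∧ (u, a) ∈ T₁.graph ∧ (f, v) ∈ T₂.graph ∧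
        (v, b) ∈ T₂†.graph ∧ g = a + b := by
  simp only [hodgeLaplacian, mem_graph_add_iff, mem_graph_naturalComp_iff]
  constructor
  · rintro ⟨a, b, ⟨u, hfu, hua⟩, ⟨v, hfv, hvb⟩, rfl⟩
    exact ⟨u, v, a, b, hfu, hua, hfv, hvb, rfl⟩
  · rintro ⟨u, v, a, b, hfu, hua, hfv, hvb, rfl⟩
    exact ⟨a, b, ⟨u, hfu, hua⟩, ⟨v, hfv, hvb⟩, rfl⟩

lemma hodgeLaplacian_isFormalAdjoint_self (hd₁ : Dense (T₁.domain : Set H₁))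
    (hd₂ : Dense (T₂.domain : Set H₂)) :
    (hodgeLaplacian T₁ T₂).IsFormalAdjoint (hodgeLaplacian T₁ T₂) :=
  have h₁ := LinearPMap.adjoint_isFormalAdjoint hd₁
  have h₂ := LinearPMap.adjoint_isFormalAdjoint hd₂
  isFormalAdjoint_add (isFormalAdjoint_naturalComp h₁ h₁.symm)
    (isFormalAdjoint_naturalComp h₂.symm h₂)

lemma inner_hodgeLaplacian_self (hd₁ : Dense (T₁.domain : Set H₁))
    (hd₂ : Dense (T₂.domain : Set H₂)) (f : (hodgeLaplacian T₁ T₂).domain)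
    (h₁ : (f : H₂) ∈ T₁†.domain) (h₂ : (f : H₂) ∈ T₂.domain) :
    ⟪hodgeLaplacian T₁ T₂ f, f⟫_𝕜 = ((‖T₁† ⟨f, h₁⟩‖ ^ 2 + ‖T₂ ⟨f, h₂⟩‖ ^ 2 : ℝ) : 𝕜) := by
  obtain ⟨u, v, a, b, hfu, hua, hfv, hvb, hab⟩ :=
    mem_graph_hodgeLaplacian_iff.mp ((hodgeLaplacian T₁ T₂).mem_graph f)
  have ha : ⟪a, (f : H₂)⟫_𝕜 = ⟪u, u⟫_𝕜 := isFormalAdjoint_iff_graph.mp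
    (LinearPMap.adjoint_isFormalAdjoint hd₁).symm u a f u hua hfu
  have hb : ⟪b, (f : H₂)⟫_𝕜 = ⟪v, v⟫_𝕜 := isFormalAdjoint_iff_graph.mp
    (LinearPMap.adjoint_isFormalAdjoint hd₂) v b f v hvb hfv
  rw [hab, inner_add_left, ha, hb, (LinearPMap.image_iff h₁).mpr hfu,
    (LinearPMap.image_iff h₂).mpr hfv, inner_self_eq_norm_sq_to_K, inner_self_eq_norm_sq_to_K]
  push_cast
  rfl

variable [CompleteSpace H₃]

lemma hodgeLaplacian_add_id_surjective (hd₁ : Dense (T₁.domain : Set H₁))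
    (hd₂ : Dense (T₂.domain : Set H₂)) (hc₁ : T₁.IsClosed) (hc₂ : T₂.IsClosed)
    (hT : ∀ x y, (x, y) ∈ T₁.graph → (y, 0) ∈ T₂.graph) (h : H₂) :
    ∃ f : (hodgeLaplacian T₁ T₂).domain, hodgeLaplacian T₁ T₂ f + f = h := by
  obtain ⟨x, u, hxu, hux⟩ := exists_mem_graph_mem_graph_adjoint hd₂ hc₂ h
  obtain ⟨y, v, hyv, hvy⟩ := exists_mem_graph_adjoint_mem_graph hd₁ hc₁ h
  have hT₁ : (x + y - h, v) ∈ T₁†.graph := by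
    convert sub_mem hyv (mem_graph_adjoint_zero hd₁ hd₂ hT hux) using 1
    rw [Prod.mk_sub_mk, sub_zero, sub_sub_eq_add_sub, add_comm]
  have hT₂ : (x + y - h, u) ∈ T₂.graph := by
    convert sub_mem hxu (hT v (h - y) hvy) using 1
    rw [Prod.mk_sub_mk, sub_zero, sub_sub_eq_add_sub]
  obtain ⟨f, hf : (f : H₂) = x + y - h, hbox : hodgeLaplacian T₁ T₂ f = (h - y) + (h - x)⟩ :=
    (hodgeLaplacian T₁ T₂).mem_graph_iff.mp <|
      mem_graph_hodgeLaplacian_iff.mpr ⟨v, u, h - y, h - x, hT₁, hvy, hT₂, hux, rfl⟩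
  refine ⟨f, ?_⟩
  rw [hf, hbox]
  abel

theorem box_selfAdjoint_nonneg_general (T₁ : H₁ →ₗ.[𝕜] H₂) (T₂ : H₂ →ₗ.[𝕜] H₃)
    (hd₁ : Dense (T₁.domain : Set H₁)) (hd₂ : Dense (T₂.domain : Set H₂))
    (hc₁ : T₁.IsClosed) (hc₂ : T₂.IsClosed)
    (hrange : LinearMap.range T₁.toFun ≤ (LinearMap.ker T₂.toFun).map T₂.domain.subtype) :
    IsSelfAdjoint (hodgeLaplacian T₁ T₂) ∧
      ∀ (f : (hodgeLaplacian T₁ T₂).domain) (h₁ : (f : H₂) ∈ T₁†.domain)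
        (h₂ : (f : H₂) ∈ T₂.domain),
        ⟪hodgeLaplacian T₁ T₂ f, f⟫_𝕜 = ((‖T₁† ⟨f, h₁⟩‖ ^ 2 + ‖T₂ ⟨f, h₂⟩‖ ^ 2 : ℝ) : 𝕜) ∧
        (0 : ℝ) ≤ ‖T₁† ⟨f, h₁⟩‖ ^ 2 + ‖T₂ ⟨f, h₂⟩‖ ^ 2 := by
  have hsurj := hodgeLaplacian_add_id_surjective hd₁ hd₂ hc₁ hc₂
    fun _ _ => mem_graph_zero_of_range_le_ker hrange
  refine ⟨?_, fun f h₁ h₂ => ⟨inner_hodgeLaplacian_self hd₁ hd₂ f h₁ h₂, by positivity⟩⟩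
  exact isSelfAdjoint_of_surjective_add_smul (hodgeLaplacian_isFormalAdjoint_self hd₁ hd₂)
    (c := 1) (by simpa using hsurj) (by simpa using hsurj)

end Laplacian

lemma boxGraph_iff_mem_graph {H₁ H₂ H₃ : Type*}
    [NormedAddCommGroup H₁] [InnerProductSpace ℂ H₁] [CompleteSpace H₁]
    [NormedAddCommGroup H₂] [InnerProductSpace ℂ H₂] [CompleteSpace H₂]
    [NormedAddCommGroup H₃] [InnerProductSpace ℂ H₃] [CompleteSpace H₃]
    {T₁ : H₁ →ₗ.[ℂ] H₂} {T₂ : H₂ →ₗ.[ℂ] H₃} {f g : H₂} :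
    boxGraph T₁ T₂ f g ↔ (f, g) ∈ (hodgeLaplacian T₁ T₂).graph := by
  rw [mem_graph_hodgeLaplacian_iff]
  constructor
  · rintro ⟨h₁, h₂, h₃, h₄, rfl⟩
    exact ⟨_, _, _, _, T₁†.mem_graph ⟨f, h₁⟩, T₁.mem_graph ⟨_, h₃⟩, T₂.mem_graph ⟨f, h₂⟩,
      T₂†.mem_graph ⟨_, h₄⟩, rfl⟩
  · simp only [LinearPMap.mem_graph_iff]
    rintro ⟨_, _, _, _, ⟨⟨f, h₁⟩, rfl, rfl⟩, ⟨⟨_, h₃⟩, rfl, rfl⟩, ⟨⟨_, h₂⟩, rfl, rfl⟩,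
      ⟨⟨_, h₄⟩, rfl, rfl⟩, rfl⟩
    exact ⟨h₁, h₂, h₃, h₄, rfl⟩

/-- The operator `□ = T₁T₁* + T₂*T₂` with domain
`{f ∈ dom T₁* ∩ dom T₂ : T₁* f ∈ dom T₁, T₂ f ∈ dom T₂*}` is densely defined,
self-adjoint (its graph coincides with the graph of its adjoint), and non-negative:
`⟨□f, f⟩ = ‖T₁*f‖² + ‖T₂f‖² ≥ 0`. -/
theorem box_selfAdjoint_nonneg
    {H₁ H₂ H₃ : Type*}
    [NormedAddCommGroup H₁] [InnerProductSpace ℂ H₁] [CompleteSpace H₁]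
    [NormedAddCommGroup H₂] [InnerProductSpace ℂ H₂] [CompleteSpace H₂]
    [NormedAddCommGroup H₃] [InnerProductSpace ℂ H₃] [CompleteSpace H₃]
    (T₁ : H₁ →ₗ.[ℂ] H₂) (T₂ : H₂ →ₗ.[ℂ] H₃)
    (hd₁ : Dense (T₁.domain : Set H₁)) (hd₂ : Dense (T₂.domain : Set H₂))
    (hc₁ : T₁.IsClosed) (hc₂ : T₂.IsClosed)
    (hrange : LinearMap.range T₁.toFun ≤
      (LinearMap.ker T₂.toFun).map T₂.domain.subtype) :
    -- `□` is densely defined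
    Dense {f : H₂ | ∃ g : H₂, boxGraph T₁ T₂ f g} ∧
    -- `□` is self-adjoint: its graph equals the graph of its (von Neumann) adjoint
    (∀ v w : H₂, boxGraph T₁ T₂ v w ↔
      ∀ f g : H₂, boxGraph T₁ T₂ f g → ⟪v, g⟫_ℂ = ⟪w, f⟫_ℂ) ∧
    -- `□` is non-negative: `⟨□f, f⟩ = ‖T₁*f‖² + ‖T₂f‖² ≥ 0`
    (∀ f g : H₂, boxGraph T₁ T₂ f g →
      ∀ (h₁ : f ∈ T₁.adjoint.domain) (h₂ : f ∈ T₂.domain),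
        ⟪g, f⟫_ℂ = ((‖T₁.adjoint ⟨f, h₁⟩‖ ^ 2 + ‖T₂ ⟨f, h₂⟩‖ ^ 2 : ℝ) : ℂ) ∧
        (0 : ℝ) ≤ ‖T₁.adjoint ⟨f, h₁⟩‖ ^ 2 + ‖T₂ ⟨f, h₂⟩‖ ^ 2) := by
  obtain ⟨hsa, hinner⟩ := box_selfAdjoint_nonneg_general T₁ T₂ hd₁ hd₂ hc₁ hc₂ hrange
  simp only [boxGraph_iff_mem_graph, ← LinearPMap.mem_domain_iff]
  refine ⟨hsa.dense_domain, fun _ _ => mem_graph_iff_of_isSelfAdjoint hsa, fun f g hfg => ?_⟩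
  obtain ⟨f, rfl, rfl⟩ := (LinearPMap.mem_graph_iff _).mp hfg
  exact hinner f
end

section
/- Let H₁, H₂, H₃ be complex Hilbert spaces and let T₁ : H₁ → H₂ and T₂ : H₂ → H₃ be densely defined, closed linear operators with range(T₁) ⊆ ker(T₂). If range(T₁) = ker(T₂) and range(T₂) is closed in H₃, then there exists a constant c > 0 such that ‖T₁*u‖² + ‖T₂u‖² ≥ c‖u‖² for all u ∈ dom(T₁*) ∩ dom(T₂). -/
open scoped LinearPMap InnerProductSpace

/-!
Let `P` be the orthogonal projection onto the closed subspace `ker T₂`. Then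
`‖u‖² = ‖P u‖² + ‖u - P u‖²`, and the two terms are controlled separately.

* `‖u - P u‖` is the distance from `u` to `ker T₂`. The open mapping theorem, applied to the
  projection of the graph of `T₂` onto the range of `T₂`, bounds it by a multiple of `‖T₂ u‖`.
* Every `y ∈ ker T₂` is some `T₁ x`, so `|⟪u, y⟫| = |⟪T₁* u, x⟫| ≤ ‖x‖ ‖T₁* u‖`. By the uniform
  boundedness principle `‖x‖` may be replaced by `C ‖y‖` with `C` independent of `y`, and `y = P u`
  gives `‖P u‖ ≤ C ‖T₁* u‖`.
-/

section Kernel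

variable {R E F : Type*} [AddCommGroup E] [AddCommGroup F]

/-- The kernel of a partially defined linear map, as a submodule of the ambient space rather than
of the domain, so that it can be compared with the range of another map and projected onto. -/
def pmapKer [Ring R] [Module R E] [Module R F] (T : E →ₗ.[R] F) : Submodule R E :=
  (LinearMap.ker T.toFun).map T.domain.subtype

theorem mem_pmapKer_iff [Ring R] [Module R E] [Module R F] {T : E →ₗ.[R] F} {x : E} :
    x ∈ pmapKer T ↔ (x, (0 : F)) ∈ T.graph := by
  rw [LinearPMap.mem_graph_iff]
  exact exists_congr fun _ => and_comm

theorem isClosed_pmapKer [CommRing R] [Module R E] [Module R F] [TopologicalSpace E]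
    [TopologicalSpace F] {T : E →ₗ.[R] F} (hT : T.IsClosed) : IsClosed (pmapKer T : Set E) := by
  have preimage_graph : (pmapKer T : Set E) = (fun x => (x, (0 : F))) ⁻¹' (T.graph : Set (E × F)) :=
    Set.ext fun _ => mem_pmapKer_iff
  rw [preimage_graph]
  exact IsClosed.preimage (by fun_prop) hT

end Kernel

section OpenMapping

variable {𝕜 E F : Type*} [NontriviallyNormedField 𝕜]
  [NormedAddCommGroup E] [NormedSpace 𝕜 E] [CompleteSpace E]
  [NormedAddCommGroup F] [NormedSpace 𝕜 F]

theorem exists_preimage_norm_le_of_isComplete_range {T : E →ₗ.[𝕜] F} (hT : T.IsClosed)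
    (hrange : IsComplete (LinearMap.range T.toFun : Set F)) :
    ∃ C > 0, ∀ u : T.domain, ∃ v : T.domain, T v = T u ∧ ‖(v : E)‖ ≤ C * ‖T u‖ := by
  let R := LinearMap.range T.toFun
  let G : Submodule 𝕜 (E × R) := T.graph.comap (LinearMap.id.prodMap R.subtype)
  have isClosed_G : IsClosed (G : Set (E × R)) :=
    IsClosed.preimage (f := fun p : E × R => (p.1, (p.2 : F))) (by fun_prop) hT
  have : CompleteSpace R := hrange.completeSpace_coe
  have : CompleteSpace G := isClosed_G.completeSpace_coe
  let toRange : G →L[𝕜] R := (ContinuousLinearMap.snd 𝕜 E R).comp G.subtypeL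
  have toRange_surjective : Function.Surjective toRange := by
    rintro ⟨_, u, rfl⟩
    exact ⟨⟨(u, ⟨T u, u, rfl⟩), T.mem_graph u⟩, rfl⟩
  obtain ⟨C, hC, hpreimage⟩ := toRange.exists_preimage_norm_le toRange_surjective
  refine ⟨C, hC, fun u => ?_⟩
  obtain ⟨⟨⟨x, y⟩, hxy⟩, hy, hnorm⟩ := hpreimage ⟨T u, u, rfl⟩
  obtain ⟨v, rfl, hv⟩ := T.mem_graph_iff.mp hxy
  exact ⟨v, hv.trans (congrArg Subtype.val hy), (norm_fst_le (_, y)).trans hnorm⟩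

theorem exists_norm_sub_pmapKer_le {T : E →ₗ.[𝕜] F} (hT : T.IsClosed)
    (hrange : IsComplete (LinearMap.range T.toFun : Set F)) :
    ∃ C > 0, ∀ u : T.domain, ∃ y ∈ pmapKer T, ‖(u : E) - y‖ ≤ C * ‖T u‖ := by
  obtain ⟨C, hC, hpreimage⟩ := exists_preimage_norm_le_of_isComplete_range hT hrange
  refine ⟨C, hC, fun u => ?_⟩
  obtain ⟨v, hv, hnorm⟩ := hpreimage u
  have sub_mem_ker : u - v ∈ LinearMap.ker T.toFun := LinearMap.sub_mem_ker_iff.mpr hv.symm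
  refine ⟨u - v, ⟨u - v, sub_mem_ker, rfl⟩, ?_⟩
  rwa [sub_sub_cancel]

end OpenMapping

section InnerProduct

variable {𝕜 E F G : Type*} [RCLike 𝕜]
  [NormedAddCommGroup E] [InnerProductSpace 𝕜 E] [NormedAddCommGroup F] [InnerProductSpace 𝕜 F]
  [NormedAddCommGroup G] [NormedSpace 𝕜 G]

theorem norm_sub_starProjection_le (K : Submodule 𝕜 E) [K.HasOrthogonalProjection] (u : E) {y : E}
    (hy : y ∈ K) : ‖u - K.starProjection u‖ ≤ ‖u - y‖ := by
  rw [Submodule.starProjection_minimal]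
  exact ciInf_le ⟨0, Set.forall_mem_range.mpr fun _ => norm_nonneg _⟩ (⟨y, hy⟩ : K)

theorem exists_norm_inner_le_of_le_range {T : E →ₗ.[𝕜] F} {S : F →ₗ.[𝕜] E}
    (hST : S.IsFormalAdjoint T) (K : Submodule 𝕜 F) [CompleteSpace K]
    (hK : K ≤ LinearMap.range T.toFun) :
    ∃ C, ∀ u : S.domain, ∀ y ∈ K, ‖⟪(u : F), y⟫_𝕜‖ ≤ C * ‖S u‖ * ‖y‖ := by
  have norm_inner_le (u : S.domain) (x : T.domain) : ‖⟪(u : F), T x⟫_𝕜‖ ≤ ‖S u‖ * ‖(x : E)‖ :=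
    hST u x ▸ norm_inner_le_norm _ _
  -- Where `S u = 0` the factor `‖S u‖⁻¹` is `0`; nothing is lost, as `u ⟂ K` there.
  let normalized (u : S.domain) : K →L[𝕜] 𝕜 :=
    ((‖S u‖⁻¹ : ℝ) : 𝕜) • (innerSL 𝕜 (u : F)).comp K.subtypeL
  have norm_normalized (u : S.domain) (y : K) :
      ‖normalized u y‖ = ‖S u‖⁻¹ * ‖⟪(u : F), y⟫_𝕜‖ := by
    simp [normalized]
  have pointwise_bounded (y : K) : ∃ C, ∀ u, ‖normalized u y‖ ≤ C := by
    obtain ⟨x, hx⟩ := hK y.2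
    refine ⟨‖(x : E)‖, fun u => ?_⟩
    rw [norm_normalized, ← hx]
    exact inv_mul_le_of_le_mul₀ (norm_nonneg _) (norm_nonneg _) (norm_inner_le u x)
  obtain ⟨C, hC⟩ := banach_steinhaus pointwise_bounded
  refine ⟨C, fun u y hy => ?_⟩
  rcases (norm_nonneg (S u)).eq_or_lt with hSu | hSu
  · obtain ⟨x, rfl⟩ := hK hy
    simpa [← hSu] using norm_inner_le u x
  · have hle : ‖S u‖⁻¹ * ‖⟪(u : F), y⟫_𝕜‖ ≤ C * ‖y‖ :=
      norm_normalized u ⟨y, hy⟩ ▸ (normalized u).le_of_opNorm_le (hC u) ⟨y, hy⟩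
    rw [inv_mul_le_iff₀ hSu] at hle
    linarith

theorem exists_norm_starProjection_le_of_le_range {T : E →ₗ.[𝕜] F} {S : F →ₗ.[𝕜] E}
    (hST : S.IsFormalAdjoint T) (K : Submodule 𝕜 F) [CompleteSpace K]
    (hK : K ≤ LinearMap.range T.toFun) :
    ∃ C, ∀ u : S.domain, ‖K.starProjection (u : F)‖ ≤ C * ‖S u‖ := by
  obtain ⟨C, hC⟩ := exists_norm_inner_le_of_le_range hST K hK
  refine ⟨max C 0, fun u => ?_⟩
  set p := K.starProjection (u : F)
  have sq_le : ‖p‖ * ‖p‖ ≤ C * ‖S u‖ * ‖p‖ := calc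
    ‖p‖ * ‖p‖ = RCLike.re ⟪p, (u : F)⟫_𝕜 :=
      (sq ‖p‖).symm.trans (K.re_inner_starProjection_eq_normSq (u : F)).symm
    _ ≤ ‖⟪(u : F), p⟫_𝕜‖ := norm_inner_symm (𝕜 := 𝕜) p (u : F) ▸ RCLike.re_le_norm _
    _ ≤ C * ‖S u‖ * ‖p‖ := hC u p (K.starProjection_apply_mem _)
  rcases (norm_nonneg p).eq_or_lt with hp | hp
  · rw [← hp]
    positivity
  · exact (le_of_mul_le_mul_right sq_le hp).trans (by gcongr; exact le_max_left C 0)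

theorem coercive_of_range_eq_ker_and_closed_range_general [CompleteSpace F]
    {T₁ : E →ₗ.[𝕜] F} {S₁ : F →ₗ.[𝕜] E} {T₂ : F →ₗ.[𝕜] G}
    (hadj : S₁.IsFormalAdjoint T₁) (hc₂ : T₂.IsClosed)
    (hker : pmapKer T₂ ≤ LinearMap.range T₁.toFun)
    (hcomplete : IsComplete (LinearMap.range T₂.toFun : Set G)) :
    ∃ c : ℝ, 0 < c ∧ ∀ (u : F) (hu₁ : u ∈ S₁.domain) (hu₂ : u ∈ T₂.domain),
      c * ‖u‖ ^ 2 ≤ ‖S₁ ⟨u, hu₁⟩‖ ^ 2 + ‖T₂ ⟨u, hu₂⟩‖ ^ 2 := by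
  let K := pmapKer T₂
  have : CompleteSpace K := (isClosed_pmapKer hc₂).completeSpace_coe
  obtain ⟨C₁, hC₁⟩ := exists_norm_starProjection_le_of_le_range hadj K hker
  obtain ⟨C₂, hC₂_pos, hC₂⟩ := exists_norm_sub_pmapKer_le hc₂ hcomplete
  refine ⟨(C₁ ^ 2 + C₂ ^ 2)⁻¹, by positivity, fun u hu₁ hu₂ => ?_⟩
  obtain ⟨y, hyK, hy⟩ := hC₂ ⟨u, hu₂⟩
  rw [inv_mul_le_iff₀ (by positivity)]
  set a := ‖S₁ ⟨u, hu₁⟩‖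
  set b := ‖T₂ ⟨u, hu₂⟩‖
  have norm_proj_le : ‖K.starProjection u‖ ≤ C₁ * a := hC₁ ⟨u, hu₁⟩
  have norm_sub_proj_le : ‖u - K.starProjection u‖ ≤ C₂ * b :=
    (norm_sub_starProjection_le K u hyK).trans hy
  calc ‖u‖ ^ 2 = ‖K.starProjection u‖ ^ 2 + ‖u - K.starProjection u‖ ^ 2 := by
        rw [K.norm_sq_eq_add_norm_sq_starProjection u, K.starProjection_orthogonal_val]
    _ ≤ (C₁ * a) ^ 2 + (C₂ * b) ^ 2 := by gcongr
    _ ≤ (C₁ ^ 2 + C₂ ^ 2) * (a ^ 2 + b ^ 2) := by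
        nlinarith [sq_nonneg (C₁ * b), sq_nonneg (C₂ * a)]

end InnerProduct

/-- If `range T₁ = ker T₂` and `range T₂` is closed in `H₃`, then there is
`c > 0` with `‖T₁*u‖² + ‖T₂u‖² ≥ c‖u‖²` for all `u ∈ dom T₁* ∩ dom T₂`. -/
theorem coercive_of_range_eq_ker_and_closed_range
    {H₁ H₂ H₃ : Type*}
    [NormedAddCommGroup H₁] [InnerProductSpace ℂ H₁] [CompleteSpace H₁]
    [NormedAddCommGroup H₂] [InnerProductSpace ℂ H₂] [CompleteSpace H₂]
    [NormedAddCommGroup H₃] [InnerProductSpace ℂ H₃] [CompleteSpace H₃]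
    (T₁ : H₁ →ₗ.[ℂ] H₂) (T₂ : H₂ →ₗ.[ℂ] H₃)
    (hd₁ : Dense (T₁.domain : Set H₁)) (hd₂ : Dense (T₂.domain : Set H₂))
    (hc₁ : T₁.IsClosed) (hc₂ : T₂.IsClosed)
    (hrange : LinearMap.range T₁.toFun ≤
      (LinearMap.ker T₂.toFun).map T₂.domain.subtype)
    (heq : LinearMap.range T₁.toFun = (LinearMap.ker T₂.toFun).map T₂.domain.subtype)
    (hclosed : IsClosed (LinearMap.range T₂.toFun : Set H₃)) :
    ∃ c : ℝ, 0 < c ∧ ∀ (u : H₂) (hu₁ : u ∈ T₁.adjoint.domain) (hu₂ : u ∈ T₂.domain),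
      c * ‖u‖ ^ 2 ≤ ‖T₁.adjoint ⟨u, hu₁⟩‖ ^ 2 + ‖T₂ ⟨u, hu₂⟩‖ ^ 2 :=
  coercive_of_range_eq_ker_and_closed_range_general (LinearPMap.adjoint_isFormalAdjoint hd₁)
    hc₂ heq.ge hclosed.isComplete
end

section
/- Let H₁, H₂, H₃ be complex Hilbert spaces and let T₁ : H₁ → H₂ and T₂ : H₂ → H₃ be densely defined, closed linear operators with range(T₁) ⊆ ker(T₂). If there exists a constant c > 0 such that ‖T₁*u‖² + ‖T₂u‖² ≥ c‖u‖² for all u ∈ dom(T₁*) ∩ dom(T₂), then range(T₁) = ker(T₂) and range(T₂) is closed in H₃. -/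
open scoped LinearPMap InnerProductSpace

/-!
The estimate splits along `H₂ = ker T₂ ⊕ (ker T₂)ᗮ`, since `T₁†` vanishes on
`(ker T₂)ᗮ ≤ (range T₁)ᗮ = ker T₁†`.

On `ker T₂` it bounds `‖u‖` by a multiple of `‖T₁† u‖`. Hence, for `f ∈ ker T₂`, the functional
`T₁† u ↦ ⟪f, u⟫` is well defined and bounded, so by Hahn-Banach and Riesz it is `⟪v, ·⟫` for some
`v`; as `T₁†† = T₁`, this means `T₁ v = f`.

On `(ker T₂)ᗮ` it bounds `‖u‖` by a multiple of `‖T₂ u‖`. A closed operator that is bounded below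
has closed range, and restricting `T₂` to `(ker T₂)ᗮ` does not change its range.
-/

/-- The kernel of a partially defined linear map `T : E →ₗ.[R] F`, as a submodule of the ambient
space `E`; `LinearMap.ker T.toFun` is a submodule of `T.domain` instead. -/
def ambientKer {R E F : Type*} [Ring R] [AddCommGroup E] [Module R E] [AddCommGroup F] [Module R F]
    (T : E →ₗ.[R] F) : Submodule R E :=
  (LinearMap.ker T.toFun).map T.domain.subtype

section Algebra

variable {R E F : Type*} [Ring R] [AddCommGroup E] [Module R E] [AddCommGroup F] [Module R F]
  {T : E →ₗ.[R] F}

theorem mem_ambientKer_iff {x : E} : x ∈ ambientKer T ↔ ∃ hx : x ∈ T.domain, T ⟨x, hx⟩ = 0 := by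
  simp [ambientKer]

theorem exists_apply_sub_eq_of_mem_ambientKer (u : T.domain) {p : E} (hp : p ∈ ambientKer T) :
    ∃ h : (u : E) - p ∈ T.domain, T ⟨u - p, h⟩ = T u := by
  obtain ⟨hp_dom, hp_zero⟩ := mem_ambientKer_iff.1 hp
  refine ⟨T.domain.sub_mem u.2 hp_dom, ?_⟩
  calc T (u - ⟨p, hp_dom⟩) = T u - T ⟨p, hp_dom⟩ := T.map_sub u ⟨p, hp_dom⟩
    _ = T u := by rw [hp_zero, sub_zero]

theorem mem_ambientKer_iff_mem_graph {x : E} : x ∈ ambientKer T ↔ (x, (0 : F)) ∈ T.graph := by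
  simp [mem_ambientKer_iff]

theorem graph_domRestrict (S : Submodule R E) :
    (T.domRestrict S).graph = T.graph ⊓ S.comap (LinearMap.fst R E F) := by
  ext ⟨x, y⟩
  constructor
  · intro h
    refine ⟨LinearPMap.le_graph_of_le LinearPMap.domRestrict_le h, ?_⟩
    exact (LinearPMap.mem_domain_of_mem_graph h).1
  · rintro ⟨h, hxS⟩
    obtain ⟨u, rfl, rfl⟩ := (LinearPMap.mem_graph_iff T).1 h
    exact (LinearPMap.mem_graph_iff _).2 ⟨⟨u, hxS, u.2⟩, rfl, rfl⟩

end Algebra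

section Topology

variable {R E F : Type*} [CommRing R] [AddCommGroup E] [Module R E] [TopologicalSpace E]
  [AddCommGroup F] [Module R F] [TopologicalSpace F] {T : E →ₗ.[R] F}

theorem isClosed_ambientKer (hT : T.IsClosed) : IsClosed (ambientKer T : Set E) := by
  have h_preimage : (ambientKer T : Set E) = (fun x ↦ (x, (0 : F))) ⁻¹' T.graph :=
    Set.ext fun _ ↦ mem_ambientKer_iff_mem_graph
  rw [h_preimage]
  exact hT.preimage (by fun_prop)

theorem isClosed_domRestrict (hT : T.IsClosed) {S : Submodule R E} (hS : IsClosed (S : Set E)) :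
    (T.domRestrict S).IsClosed := by
  rw [LinearPMap.IsClosed, graph_domRestrict]
  exact hT.inter (hS.preimage continuous_fst)

end Topology

theorem isClosed_range_of_antilipschitzWith {R E F : Type*} [CommRing R]
    [SeminormedAddCommGroup E] [Module R E] [CompleteSpace E] [SeminormedAddCommGroup F]
    [Module R F] {T : E →ₗ.[R] F} (hT : T.IsClosed) {K : NNReal}
    (hK : AntilipschitzWith K T.toFun) : IsClosed (LinearMap.range T.toFun : Set F) := by
  refine isClosed_of_closure_subset fun y hy ↦ ?_
  let l : Filter T.domain := Filter.comap T.toFun (nhds y)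
  have : l.NeBot := Filter.comap_neBot_iff.2 fun _ ht ↦ by
    obtain ⟨_, hut, u, rfl⟩ := mem_closure_iff_nhds.1 hy _ ht
    exact ⟨u, hut⟩
  have hl : Cauchy l := cauchy_nhds.comap' hK.comap_uniformity_le this
  obtain ⟨x, hx⟩ := cauchy_iff_exists_le_nhds.1 (hl.map uniformContinuous_subtype_val)
  have h_graph : (x, y) ∈ T.graph :=
    hT.mem_of_tendsto (Filter.Tendsto.prodMk_nhds hx Filter.tendsto_comap)
      (Filter.Eventually.of_forall T.mem_graph)
  obtain ⟨u, -, hu⟩ := (LinearPMap.mem_graph_iff T).1 h_graph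
  exact ⟨u, hu⟩

section OrthogonalKernel

variable {𝕜 E F : Type*} [RCLike 𝕜] [NormedAddCommGroup E] [InnerProductSpace 𝕜 E]

theorem range_domRestrict_ambientKer_orthogonal [AddCommGroup F] [Module 𝕜 F]
    {T : E →ₗ.[𝕜] F} [(ambientKer T).HasOrthogonalProjection] :
    LinearMap.range (T.domRestrict (ambientKer T)ᗮ).toFun = LinearMap.range T.toFun := by
  apply le_antisymm
  · rintro _ ⟨u, rfl⟩
    exact ⟨⟨u, u.2.2⟩, rfl⟩
  · rintro _ ⟨u, rfl⟩
    let p := (ambientKer T).starProjection (u : E)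
    have hp : p ∈ ambientKer T := Submodule.starProjection_apply_mem _ _
    obtain ⟨h_dom, h_apply⟩ := exists_apply_sub_eq_of_mem_ambientKer u hp
    exact ⟨⟨u - p, Submodule.sub_starProjection_mem_orthogonal _, h_dom⟩, h_apply⟩

theorem isClosed_range_of_norm_le_on_ambientKer_orthogonal [CompleteSpace E]
    [SeminormedAddCommGroup F] [Module 𝕜 F] {T : E →ₗ.[𝕜] F} (hT : T.IsClosed)
    {C : ℝ} (hC : ∀ u : T.domain, (u : E) ∈ (ambientKer T)ᗮ → ‖(u : E)‖ ≤ C * ‖T u‖) :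
    IsClosed (LinearMap.range T.toFun : Set F) := by
  have : CompleteSpace (ambientKer T) := (isClosed_ambientKer hT).completeSpace_coe
  rw [← range_domRestrict_ambientKer_orthogonal]
  refine isClosed_range_of_antilipschitzWith (K := C.toNNReal)
    (isClosed_domRestrict hT (Submodule.isClosed_orthogonal _)) ?_
  refine AddMonoidHomClass.antilipschitz_of_bound _ fun u ↦ ?_
  refine (hC ⟨u, u.2.2⟩ u.2.1).trans ?_
  exact mul_le_mul_of_nonneg_right (Real.le_coe_toNNReal C) (norm_nonneg _)

end OrthogonalKernel

section Adjoint

variable {𝕜 E F : Type*} [RCLike 𝕜] [NormedAddCommGroup E] [InnerProductSpace 𝕜 E]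
  [NormedAddCommGroup F] [InnerProductSpace 𝕜 F]

theorem adjoint_adjoint_of_isClosed [CompleteSpace E] [CompleteSpace F]
    {g : Submodule 𝕜 (E × F)} (hg : IsClosed (g : Set (E × F))) : g.adjoint.adjoint = g := by
  let G : Submodule 𝕜 (WithLp 2 (E × F)) :=
    g.comap (WithLp.linearEquiv 2 𝕜 (E × F)).toLinearMap
  have hG : IsClosed (G : Set (WithLp 2 (E × F))) :=
    hg.preimage (WithLp.prod_continuous_ofLp 2 E F)
  have : CompleteSpace G := hG.completeSpace_coe
  have mem_orthogonal_iff (H : Submodule 𝕜 (WithLp 2 (E × F))) (a : E) (b : F) :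
      WithLp.toLp 2 (a, b) ∈ Hᗮ ↔ ∀ x y, WithLp.toLp 2 (x, y) ∈ H → ⟪x, a⟫_𝕜 + ⟪y, b⟫_𝕜 = 0 := by
    simp [Submodule.mem_orthogonal, (WithLp.toLp_surjective 2).forall]
  have mem_adjoint_iff_mem_orthogonal (a : E) (b : F) : (-b, a) ∈ g.adjoint ↔
      WithLp.toLp 2 (a, b) ∈ Gᗮ := by
    rw [← neg_mem_iff, Prod.neg_mk, neg_neg]
    simp [mem_orthogonal_iff, G, add_comm]
  ext ⟨a, b⟩
  calc (a, b) ∈ g.adjoint.adjoint ↔ WithLp.toLp 2 (a, b) ∈ Gᗮᗮ := by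
        rw [Submodule.mem_adjoint_iff, mem_orthogonal_iff]
        simp only [← mem_adjoint_iff_mem_orthogonal]
        constructor
        · intro h x y hxy
          simpa using h (-y) x hxy
        · intro h y x hxy
          simpa [← sub_eq_add_neg] using h x (-y) (by rwa [neg_neg])
    _ ↔ WithLp.toLp 2 (a, b) ∈ G := by rw [Submodule.orthogonal_orthogonal]
    _ ↔ (a, b) ∈ g := Iff.rfl

theorem adjoint_graph_adjoint [CompleteSpace E] [CompleteSpace F] {T : E →ₗ.[𝕜] F}
    (hd : Dense (T.domain : Set E)) (hT : T.IsClosed) : T†.graph.adjoint = T.graph := by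
  rw [LinearPMap.adjoint_graph_eq_graph_adjoint hd, adjoint_adjoint_of_isClosed hT]

theorem ambientKer_adjoint [CompleteSpace E] {T : E →ₗ.[𝕜] F} (hd : Dense (T.domain : Set E)) :
    ambientKer T† = (LinearMap.range T.toFun)ᗮ := by
  ext u
  rw [mem_ambientKer_iff_mem_graph, LinearPMap.adjoint_graph_eq_graph_adjoint hd,
    Submodule.mem_adjoint_iff, Submodule.mem_orthogonal]
  constructor
  · rintro h _ ⟨x, rfl⟩
    simpa using h x (T x) (T.mem_graph x)
  · intro h a b hab
    obtain ⟨x, rfl, rfl⟩ := (LinearPMap.mem_graph_iff T).1 hab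
    simpa using h (T x) ⟨x, rfl⟩

theorem exists_inner_eq_of_norm_le {V : Type*} [AddCommGroup V] [Module 𝕜 V] [CompleteSpace E]
    (A : V →ₗ[𝕜] E) (φ : V →ₗ[𝕜] 𝕜) {C : ℝ} (h : ∀ u, ‖φ u‖ ≤ C * ‖A u‖) :
    ∃ v : E, ∀ u, ⟪v, A u⟫_𝕜 = φ u := by
  obtain ⟨ψ, hψ, -⟩ := exists_extension_norm_eq (LinearMap.range A) (φ.compLeftInverse A)
  refine ⟨(InnerProductSpace.toDual 𝕜 E).symm ψ, fun u ↦ ?_⟩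
  calc ⟪(InnerProductSpace.toDual 𝕜 E).symm ψ, A u⟫_𝕜 = ψ (A u) :=
        InnerProductSpace.toDual_symm_apply
    _ = φ.compLeftInverse A ⟨A u, u, rfl⟩ := hψ ⟨A u, u, rfl⟩
    _ = φ u := φ.compLeftInverse_apply_of_bdd A ⟨C, h⟩ u _ rfl

variable [CompleteSpace E] [CompleteSpace F] {T : E →ₗ.[𝕜] F}

theorem mem_range_of_norm_inner_le (hd : Dense (T.domain : Set E)) (hT : T.IsClosed) {f : F}
    {C : ℝ} (h : ∀ u : T†.domain, ‖⟪f, (u : F)⟫_𝕜‖ ≤ C * ‖T† u‖) :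
    f ∈ LinearMap.range T.toFun := by
  obtain ⟨v, hv⟩ := exists_inner_eq_of_norm_le T†.toFun (innerₛₗ 𝕜 f ∘ₗ T†.domain.subtype) h
  have h_graph : (v, f) ∈ T.graph := by
    rw [← adjoint_graph_adjoint hd hT, Submodule.mem_adjoint_iff]
    rintro _ _ hab
    obtain ⟨u, rfl, rfl⟩ := (LinearPMap.mem_graph_iff _).1 hab
    have hu := congrArg (starRingEnd 𝕜) (hv u)
    simpa [sub_eq_zero] using hu
  obtain ⟨x, -, hx⟩ := (LinearPMap.mem_graph_iff T).1 h_graph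
  exact ⟨x, hx⟩

theorem range_eq_of_norm_le_adjoint (hd : Dense (T.domain : Set E)) (hT : T.IsClosed)
    {K : Submodule 𝕜 F} [K.HasOrthogonalProjection] (hTK : LinearMap.range T.toFun ≤ K) {C : ℝ}
    (hC : ∀ u : T†.domain, (u : F) ∈ K → ‖(u : F)‖ ≤ C * ‖T† u‖) :
    LinearMap.range T.toFun = K := by
  refine le_antisymm hTK fun f hf ↦ mem_range_of_norm_inner_le hd hT (C := ‖f‖ * C) fun u ↦ ?_
  obtain ⟨p, hp, q, hq, hpq⟩ := K.exists_add_mem_mem_orthogonal (u : F)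
  have hq_ker : q ∈ ambientKer T† := by
    rw [ambientKer_adjoint hd]
    exact Submodule.orthogonal_le hTK hq
  have norm_p_le : ‖p‖ ≤ C * ‖T† u‖ := by
    obtain ⟨h_dom, h_apply⟩ := exists_apply_sub_eq_of_mem_ambientKer u hq_ker
    obtain rfl : p = u - q := eq_sub_of_add_eq hpq.symm
    exact h_apply ▸ hC ⟨u - q, h_dom⟩ hp
  calc ‖⟪f, (u : F)⟫_𝕜‖ = ‖⟪f, p⟫_𝕜‖ := by
        rw [hpq, inner_add_right, Submodule.inner_right_of_mem_orthogonal hf hq, add_zero]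
    _ ≤ ‖f‖ * ‖p‖ := norm_inner_le_norm f p
    _ ≤ ‖f‖ * (C * ‖T† u‖) := by gcongr
    _ = ‖f‖ * C * ‖T† u‖ := (mul_assoc _ _ _).symm

end Adjoint

theorem le_inv_sqrt_mul_of_mul_sq_le {a b c : ℝ} (hc : 0 < c) (hb : 0 ≤ b)
    (h : c * a ^ 2 ≤ b ^ 2) : a ≤ (√c)⁻¹ * b := by
  rw [le_inv_mul_iff₀ (Real.sqrt_pos.2 hc)]
  refine le_of_sq_le_sq ?_ hb
  rwa [mul_pow, Real.sq_sqrt hc.le]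

theorem range_eq_ker_and_closed_range_of_coercive_general {𝕜 H₁ H₂ H₃ : Type*} [RCLike 𝕜]
    [NormedAddCommGroup H₁] [InnerProductSpace 𝕜 H₁] [CompleteSpace H₁]
    [NormedAddCommGroup H₂] [InnerProductSpace 𝕜 H₂] [CompleteSpace H₂]
    [NormedAddCommGroup H₃] [NormedSpace 𝕜 H₃]
    {T₁ : H₁ →ₗ.[𝕜] H₂} {T₂ : H₂ →ₗ.[𝕜] H₃} (hd₁ : Dense (T₁.domain : Set H₁))
    (hc₁ : T₁.IsClosed) (hc₂ : T₂.IsClosed) (hrange : LinearMap.range T₁.toFun ≤ ambientKer T₂)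
    {c : ℝ} (hc : 0 < c)
    (hcoercive : ∀ (u : H₂) (hu₁ : u ∈ T₁†.domain) (hu₂ : u ∈ T₂.domain),
      c * ‖u‖ ^ 2 ≤ ‖T₁† ⟨u, hu₁⟩‖ ^ 2 + ‖T₂ ⟨u, hu₂⟩‖ ^ 2) :
    LinearMap.range T₁.toFun = ambientKer T₂ ∧
      IsClosed (LinearMap.range T₂.toFun : Set H₃) := by
  have : CompleteSpace (ambientKer T₂) := (isClosed_ambientKer hc₂).completeSpace_coe
  constructor
  · refine range_eq_of_norm_le_adjoint hd₁ hc₁ hrange (C := (√c)⁻¹) fun u hu ↦ ?_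
    obtain ⟨hu₂, hT₂u⟩ := mem_ambientKer_iff.1 hu
    refine le_inv_sqrt_mul_of_mul_sq_le hc (norm_nonneg _) ?_
    simpa [hT₂u] using hcoercive u u.2 hu₂
  · refine isClosed_range_of_norm_le_on_ambientKer_orthogonal hc₂ (C := (√c)⁻¹) fun u hu ↦ ?_
    obtain ⟨hu₁, hT₁u⟩ : ∃ hu₁ : (u : H₂) ∈ T₁†.domain, T₁† ⟨u, hu₁⟩ = 0 := by
      rw [← mem_ambientKer_iff, ambientKer_adjoint hd₁]
      exact Submodule.orthogonal_le hrange hu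
    refine le_inv_sqrt_mul_of_mul_sq_le hc (norm_nonneg _) ?_
    simpa [hT₁u] using hcoercive u hu₁ u.2

/-- If there is `c > 0` with `‖T₁*u‖² + ‖T₂u‖² ≥ c‖u‖²` for all
`u ∈ dom T₁* ∩ dom T₂`, then `range T₁ = ker T₂` and `range T₂` is closed in `H₃`. -/
theorem range_eq_ker_and_closed_range_of_coercive
    {H₁ H₂ H₃ : Type*}
    [NormedAddCommGroup H₁] [InnerProductSpace ℂ H₁] [CompleteSpace H₁]
    [NormedAddCommGroup H₂] [InnerProductSpace ℂ H₂] [CompleteSpace H₂]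
    [NormedAddCommGroup H₃] [InnerProductSpace ℂ H₃] [CompleteSpace H₃]
    (T₁ : H₁ →ₗ.[ℂ] H₂) (T₂ : H₂ →ₗ.[ℂ] H₃)
    (hd₁ : Dense (T₁.domain : Set H₁)) (hd₂ : Dense (T₂.domain : Set H₂))
    (hc₁ : T₁.IsClosed) (hc₂ : T₂.IsClosed)
    (hrange : LinearMap.range T₁.toFun ≤
      (LinearMap.ker T₂.toFun).map T₂.domain.subtype)
    (c : ℝ) (hc : 0 < c)
    (hcoercive : ∀ (u : H₂) (hu₁ : u ∈ T₁.adjoint.domain) (hu₂ : u ∈ T₂.domain),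
      c * ‖u‖ ^ 2 ≤ ‖T₁.adjoint ⟨u, hu₁⟩‖ ^ 2 + ‖T₂ ⟨u, hu₂⟩‖ ^ 2) :
    LinearMap.range T₁.toFun = (LinearMap.ker T₂.toFun).map T₂.domain.subtype ∧
    IsClosed (LinearMap.range T₂.toFun : Set H₃) :=
  range_eq_ker_and_closed_range_of_coercive_general hd₁ hc₁ hc₂ hrange hc hcoercive
end

section
/- Let H₁, H₂, H₃ be complex Hilbert spaces and let T₁ : H₁ → H₂ and T₂ : H₂ → H₃ be densely defined, closed linear operators with range(T₁) ⊆ ker(T₂). Suppose range(T₁) and range(T₂) are closed and set N = ker(T₁*) ∩ ker(T₂). Then there exists a constant c > 0 such that ‖T₁*u‖² + ‖T₂u‖² ≥ c‖u‖² for all u ∈ dom(T₁*) ∩ dom(T₂) with u ⊥ N. -/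
open scoped LinearPMap InnerProductSpace

/-!
Let `R = range T₁ ⊆ K = ker T₂`, so that `N = Rᗮ ⊓ K`, and write `u = p + q` with `p ∈ R` and
`q ∈ Rᗮ`. Since `K = R ⊔ N`, the vector `q` is orthogonal to all of `K` as soon as `u ⊥ N`.
The open mapping theorem then bounds `‖q‖` by `‖T₂ q‖ = ‖T₂ u‖`. For `p`, the functionals
`⟪u, ·⟫` on `R` satisfy `|⟪u, T₁ x⟫| ≤ ‖T₁* u‖ ‖x‖`, hence are pointwise bounded relative to
`‖T₁* u‖`, and uniform boundedness on the Hilbert space `R` gives `‖p‖ ≤ C ‖T₁* u‖`.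
-/

section Banach

theorem exists_preimage_norm_le_of_isClosed_range {𝕜 E F : Type*} [NontriviallyNormedField 𝕜]
    [NormedAddCommGroup E] [NormedSpace 𝕜 E] [CompleteSpace E]
    [NormedAddCommGroup F] [NormedSpace 𝕜 F] [CompleteSpace F]
    {T : E →ₗ.[𝕜] F} (hT : T.IsClosed) (hR : IsClosed (LinearMap.range T.toFun : Set F)) :
    ∃ C > 0, ∀ y ∈ LinearMap.range T.toFun, ∃ x : T.domain, T x = y ∧ ‖(x : E)‖ ≤ C * ‖y‖ := by
  have : CompleteSpace T.graph :=
    (show IsClosed (T.graph : Set (E × F)) from hT).completeSpace_coe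
  have : CompleteSpace (LinearMap.range T.toFun) := hR.completeSpace_coe
  have snd_mem_range (z : T.graph) : (z : E × F).2 ∈ LinearMap.range T.toFun := by
    obtain ⟨x, -, hx⟩ := (LinearPMap.mem_graph_iff T).1 z.2
    exact ⟨x, hx⟩
  let f : T.graph →L[𝕜] LinearMap.range T.toFun :=
    ((ContinuousLinearMap.snd 𝕜 E F).comp T.graph.subtypeL).codRestrict _ snd_mem_range
  have f_surjective : Function.Surjective f := by
    rintro ⟨_, x, rfl⟩
    exact ⟨⟨(x, T x), T.mem_graph x⟩, rfl⟩
  obtain ⟨C, hC, hpre⟩ := f.exists_preimage_norm_le f_surjective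
  refine ⟨C, hC, fun y hy => ?_⟩
  obtain ⟨z, hzy, hzC⟩ := hpre ⟨y, hy⟩
  obtain ⟨x, hx₁, hx₂⟩ := (LinearPMap.mem_graph_iff T).1 z.2
  refine ⟨x, hx₂.trans (congrArg Subtype.val hzy), ?_⟩
  rw [hx₁]
  exact (norm_fst_le (z : E × F)).trans hzC

theorem banach_steinhaus_weighted {𝕜 ι E F : Type*} [RCLike 𝕜]
    [NormedAddCommGroup E] [NormedSpace 𝕜 E] [CompleteSpace E]
    [NormedAddCommGroup F] [NormedSpace 𝕜 F]
    {f : ι → E →L[𝕜] F} {a : ι → ℝ} (ha : ∀ i, 0 ≤ a i)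
    (h : ∀ x, ∃ C, ∀ i, ‖f i x‖ ≤ C * a i) : ∃ C, ∀ i, ‖f i‖ ≤ C * a i := by
  have scaled_bound (x : E) : ∃ C, ∀ i, ‖(((a i)⁻¹ : ℝ) : 𝕜) • f i x‖ ≤ C := by
    obtain ⟨C, hC⟩ := h x
    refine ⟨|C|, fun i => ?_⟩
    rw [norm_smul, RCLike.norm_ofReal, abs_of_nonneg (inv_nonneg.2 (ha i))]
    refine inv_mul_le_of_le_mul₀ (ha i) (abs_nonneg C) ?_
    rw [mul_comm]
    exact (hC i).trans (mul_le_mul_of_nonneg_right (le_abs_self C) (ha i))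
  -- If `a i = 0`, then `(a i)⁻¹ = 0` and the scaled bound says nothing about `f i`.
  obtain ⟨C, hC⟩ := banach_steinhaus (g := fun i => (((a i)⁻¹ : ℝ) : 𝕜) • f i) scaled_bound
  refine ⟨C, fun i => ?_⟩
  rcases (ha i).eq_or_lt with hai | hai
  · have f_eq_zero : f i = 0 := by
      ext x
      obtain ⟨C', hC'⟩ := h x
      simpa only [← hai, mul_zero, norm_le_zero_iff] using! hC' i
    rw [f_eq_zero, norm_zero, ← hai, mul_zero]
  · have hCi := hC i
    rwa [norm_smul, RCLike.norm_ofReal, abs_of_pos (inv_pos.2 hai), inv_mul_le_iff₀ hai,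
      mul_comm] at hCi

end Banach

section Adjoint

variable {𝕜 E F : Type*} [RCLike 𝕜]
  [NormedAddCommGroup E] [InnerProductSpace 𝕜 E] [CompleteSpace E]
  [NormedAddCommGroup F] [InnerProductSpace 𝕜 F] {T : E →ₗ.[𝕜] F}

theorem map_ker_adjoint_eq_orthogonal_range (hT : Dense (T.domain : Set E)) :
    (LinearMap.ker T.adjoint.toFun).map T.adjoint.domain.subtype =
      (LinearMap.range T.toFun)ᗮ := by
  ext y
  rw [Submodule.mem_orthogonal']
  constructor
  · rintro ⟨v, hv, rfl⟩ _ ⟨x, rfl⟩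
    calc ⟪(v : F), T x⟫_𝕜 = ⟪T.adjoint v, (x : E)⟫_𝕜 :=
          (LinearPMap.adjoint_isFormalAdjoint hT v x).symm
      _ = 0 := by rw [show T.adjoint v = 0 from hv, inner_zero_left]
  · intro hy
    have inner_zero_eq (x : T.domain) : ⟪(0 : E), (x : E)⟫_𝕜 = ⟪y, T x⟫_𝕜 := by
      rw [inner_zero_left, hy (T x) ⟨x, rfl⟩]
    have hy_dom : y ∈ T.adjoint.domain := T.mem_adjoint_domain_of_exists y ⟨0, inner_zero_eq⟩
    exact ⟨⟨y, hy_dom⟩, LinearPMap.adjoint_apply_eq hT _ inner_zero_eq, rfl⟩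

theorem exists_norm_starProjection_range_le_norm_adjoint
    (hT : Dense (T.domain : Set E)) [CompleteSpace (LinearMap.range T.toFun)] :
    ∃ C, ∀ y : T.adjoint.domain,
      ‖(LinearMap.range T.toFun).starProjection (y : F)‖ ≤ C * ‖T.adjoint y‖ := by
  let R := LinearMap.range T.toFun
  have pointwise_bound (z : R) : ∃ C, ∀ y : T.adjoint.domain,
      ‖innerSL 𝕜 (R.orthogonalProjectionOnto (y : F)) z‖ ≤ C * ‖T.adjoint y‖ := by
    obtain ⟨_, x, rfl⟩ := z
    refine ⟨‖(x : E)‖, fun y => ?_⟩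
    calc ‖⟪R.orthogonalProjectionOnto (y : F), (⟨T x, x, rfl⟩ : R)⟫_𝕜‖ = ‖⟪(y : F), T x⟫_𝕜‖ := by
          rw [Submodule.inner_orthogonalProjectionOnto_eq_of_mem_right]
      _ = ‖⟪T.adjoint y, (x : E)⟫_𝕜‖ := by rw [LinearPMap.adjoint_isFormalAdjoint hT y x]
      _ ≤ ‖(x : E)‖ * ‖T.adjoint y‖ := by
          rw [mul_comm]
          exact norm_inner_le_norm _ _
  simpa only [innerSL_apply_norm] using!
    banach_steinhaus_weighted (fun y => norm_nonneg (T.adjoint y)) pointwise_bound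

end Adjoint

section OrthogonalToKernel

variable {𝕜 E F : Type*} [RCLike 𝕜]
  [NormedAddCommGroup E] [InnerProductSpace 𝕜 E] {R K : Submodule 𝕜 E}
  [NormedAddCommGroup F] [NormedSpace 𝕜 F] {T : E →ₗ.[𝕜] F}

theorem sub_starProjection_mem_orthogonal_of_le [R.HasOrthogonalProjection]
    (hRK : R ≤ K) {u : E} (hu : u ∈ (Rᗮ ⊓ K)ᗮ) : u - R.starProjection u ∈ Kᗮ := by
  have proj_mem : R.starProjection u ∈ (Rᗮ ⊓ K)ᗮ :=
    Submodule.orthogonal_le inf_le_left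
      (R.le_orthogonal_orthogonal (R.starProjection_apply_mem u))
  rw [← Submodule.sup_orthogonal_inf_of_hasOrthogonalProjection hRK, ← Submodule.inf_orthogonal]
  exact ⟨R.sub_starProjection_mem_orthogonal u, Submodule.sub_mem _ hu proj_mem⟩

theorem exists_norm_le_of_mem_orthogonal_ker [CompleteSpace E] [CompleteSpace F]
    (hT : T.IsClosed) (hR : IsClosed (LinearMap.range T.toFun : Set F)) :
    ∃ C, ∀ x : T.domain, (x : E) ∈ ((LinearMap.ker T.toFun).map T.domain.subtype)ᗮ →
      ‖(x : E)‖ ≤ C * ‖T x‖ := by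
  obtain ⟨C, -, hpre⟩ := exists_preimage_norm_le_of_isClosed_range hT hR
  refine ⟨C, fun x hx => ?_⟩
  obtain ⟨w, hw, hwC⟩ := hpre (T x) ⟨x, rfl⟩
  have sub_mem_ker : w - x ∈ LinearMap.ker T.toFun := by
    rw [LinearMap.mem_ker, map_sub]
    exact sub_eq_zero.2 hw
  have inner_eq_zero : ⟪(x : E), (w : E) - x⟫_𝕜 = 0 :=
    (Submodule.mem_orthogonal' _ _).1 hx _ ⟨w - x, sub_mem_ker, rfl⟩
  have norm_le : ‖(x : E)‖ ≤ ‖(w : E)‖ := by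
    refine nonneg_le_nonneg_of_sq_le_sq (norm_nonneg _) ?_
    calc ‖(x : E)‖ * ‖(x : E)‖
        ≤ ‖(x : E)‖ * ‖(x : E)‖ + ‖(w : E) - x‖ * ‖(w : E) - x‖ :=
          le_add_of_nonneg_right (mul_self_nonneg _)
      _ = ‖(w : E)‖ * ‖(w : E)‖ := by
          rw [← norm_add_sq_eq_norm_sq_add_norm_sq_of_inner_eq_zero _ _ inner_eq_zero,
            add_sub_cancel]
  exact norm_le.trans hwC

theorem exists_norm_sub_starProjection_le_of_le_ker [CompleteSpace E] [CompleteSpace F]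
    [R.HasOrthogonalProjection] (hT : T.IsClosed)
    (hR : IsClosed (LinearMap.range T.toFun : Set F))
    (hRT : R ≤ (LinearMap.ker T.toFun).map T.domain.subtype) :
    ∃ C, ∀ u : T.domain, (u : E) ∈ (Rᗮ ⊓ (LinearMap.ker T.toFun).map T.domain.subtype)ᗮ →
      ‖(u : E) - R.starProjection (u : E)‖ ≤ C * ‖T u‖ := by
  obtain ⟨C, hC⟩ := exists_norm_le_of_mem_orthogonal_ker hT hR
  refine ⟨C, fun u hu => ?_⟩
  obtain ⟨v, hv, hvp⟩ := hRT (R.starProjection_apply_mem (u : E))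
  have hvp' : (v : E) = R.starProjection (u : E) := hvp
  have map_sub_eq : T (u - v) = T u := by
    rw [LinearPMap.map_sub, show T v = 0 from hv, sub_zero]
  have sub_mem : ((u - v : T.domain) : E) ∈ ((LinearMap.ker T.toFun).map T.domain.subtype)ᗮ := by
    rw [Submodule.coe_sub, hvp']
    exact sub_starProjection_mem_orthogonal_of_le hRT hu
  calc ‖(u : E) - R.starProjection (u : E)‖ = ‖((u - v : T.domain) : E)‖ := by
        rw [Submodule.coe_sub, hvp']
    _ ≤ C * ‖T (u - v)‖ := hC _ sub_mem
    _ = C * ‖T u‖ := by rw [map_sub_eq]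

end OrthogonalToKernel

theorem coercive_on_orthogonal_of_closed_ranges_general
    {𝕜 H₁ H₂ H₃ : Type*} [RCLike 𝕜]
    [NormedAddCommGroup H₁] [InnerProductSpace 𝕜 H₁] [CompleteSpace H₁]
    [NormedAddCommGroup H₂] [InnerProductSpace 𝕜 H₂] [CompleteSpace H₂]
    [NormedAddCommGroup H₃] [NormedSpace 𝕜 H₃] [CompleteSpace H₃]
    (T₁ : H₁ →ₗ.[𝕜] H₂) (T₂ : H₂ →ₗ.[𝕜] H₃)
    (hd₁ : Dense (T₁.domain : Set H₁)) (hc₂ : T₂.IsClosed)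
    (hrange : LinearMap.range T₁.toFun ≤
      (LinearMap.ker T₂.toFun).map T₂.domain.subtype)
    (hclosed₁ : IsClosed (LinearMap.range T₁.toFun : Set H₂))
    (hclosed₂ : IsClosed (LinearMap.range T₂.toFun : Set H₃)) :
    ∃ c : ℝ, 0 < c ∧ ∀ (u : H₂) (hu₁ : u ∈ T₁.adjoint.domain) (hu₂ : u ∈ T₂.domain),
      u ∈ ((LinearMap.ker T₁.adjoint.toFun).map T₁.adjoint.domain.subtype ⊓
          (LinearMap.ker T₂.toFun).map T₂.domain.subtype)ᗮ →
      c * ‖u‖ ^ 2 ≤ ‖T₁.adjoint ⟨u, hu₁⟩‖ ^ 2 + ‖T₂ ⟨u, hu₂⟩‖ ^ 2 := by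
  have : CompleteSpace (LinearMap.range T₁.toFun) := hclosed₁.completeSpace_coe
  obtain ⟨C, hC⟩ := exists_norm_starProjection_range_le_norm_adjoint hd₁
  obtain ⟨D, hD⟩ := exists_norm_sub_starProjection_le_of_le_ker hc₂ hclosed₂ hrange
  refine ⟨(C ^ 2 + D ^ 2 + 1)⁻¹, by positivity, fun u hu₁ hu₂ hu => ?_⟩
  rw [map_ker_adjoint_eq_orthogonal_range hd₁] at hu
  rw [inv_mul_le_iff₀ (by positivity)]
  let R := LinearMap.range T₁.toFun
  let a := ‖T₁.adjoint ⟨u, hu₁⟩‖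
  let b := ‖T₂ ⟨u, hu₂⟩‖
  have hp : ‖R.starProjection u‖ ≤ C * a := hC ⟨u, hu₁⟩
  have hq : ‖u - R.starProjection u‖ ≤ D * b := hD ⟨u, hu₂⟩ hu
  calc ‖u‖ ^ 2 = ‖R.starProjection u‖ ^ 2 + ‖u - R.starProjection u‖ ^ 2 := by
        rw [R.norm_sq_eq_add_norm_sq_starProjection u, Submodule.starProjection_orthogonal_val]
    _ ≤ (C * a) ^ 2 + (D * b) ^ 2 := by gcongr
    _ ≤ (C ^ 2 + D ^ 2 + 1) * (a ^ 2 + b ^ 2) := by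
        nlinarith [sq_nonneg a, sq_nonneg b, sq_nonneg (C * b), sq_nonneg (D * a)]

/-- If `range T₁` and `range T₂` are closed and `N = ker T₁* ∩ ker T₂`,
then there is `c > 0` with `‖T₁*u‖² + ‖T₂u‖² ≥ c‖u‖²` for all `u ∈ dom T₁* ∩ dom T₂`
with `u ⊥ N`. -/
theorem coercive_on_orthogonal_of_closed_ranges
    {H₁ H₂ H₃ : Type*}
    [NormedAddCommGroup H₁] [InnerProductSpace ℂ H₁] [CompleteSpace H₁]
    [NormedAddCommGroup H₂] [InnerProductSpace ℂ H₂] [CompleteSpace H₂]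
    [NormedAddCommGroup H₃] [InnerProductSpace ℂ H₃] [CompleteSpace H₃]
    (T₁ : H₁ →ₗ.[ℂ] H₂) (T₂ : H₂ →ₗ.[ℂ] H₃)
    (hd₁ : Dense (T₁.domain : Set H₁)) (hd₂ : Dense (T₂.domain : Set H₂))
    (hc₁ : T₁.IsClosed) (hc₂ : T₂.IsClosed)
    (hrange : LinearMap.range T₁.toFun ≤
      (LinearMap.ker T₂.toFun).map T₂.domain.subtype)
    (hclosed₁ : IsClosed (LinearMap.range T₁.toFun : Set H₂))
    (hclosed₂ : IsClosed (LinearMap.range T₂.toFun : Set H₃)) :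
    ∃ c : ℝ, 0 < c ∧ ∀ (u : H₂) (hu₁ : u ∈ T₁.adjoint.domain) (hu₂ : u ∈ T₂.domain),
      u ∈ ((LinearMap.ker T₁.adjoint.toFun).map T₁.adjoint.domain.subtype ⊓
          (LinearMap.ker T₂.toFun).map T₂.domain.subtype)ᗮ →
      c * ‖u‖ ^ 2 ≤ ‖T₁.adjoint ⟨u, hu₁⟩‖ ^ 2 + ‖T₂ ⟨u, hu₂⟩‖ ^ 2 :=
  coercive_on_orthogonal_of_closed_ranges_general T₁ T₂ hd₁ hc₂ hrange hclosed₁ hclosed₂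
end

section
/- Let H₁, H₂, H₃ be complex Hilbert spaces and let T₁ : H₁ → H₂ and T₂ : H₂ → H₃ be densely defined, closed linear operators with range(T₁) ⊆ ker(T₂). Suppose there exist a finite-dimensional subspace L ⊆ H₂ and a constant c > 0 such that ‖T₁*u‖² + ‖T₂u‖² ≥ c‖u‖² for all u ∈ dom(T₁*) ∩ dom(T₂) with u ⊥ L. Then range(T₁) and range(T₂) are closed, and ker(T₁*) ∩ ker(T₂) is finite-dimensional. -/
open scoped LinearPMap InnerProductSpace

/-! The argument is carried out for the graphs of the operators. If `S` and `T` are closed,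
`(ker S)ᗮ ≤ ker T`, and `‖Su‖² + ‖Tu‖² ≥ c‖u‖²` on `Lᗮ`, then `T` has the same range as its
restriction to `ker S`. There the first term vanishes, so `T` is bounded below on `ker S ⊓ Lᗮ`, of
finite codimension in `ker S`; hence `range T` is closed. The hypotheses are symmetric in `S` and
`T`, because `(ker T)ᗮ ≤ (ker S)ᗮᗮ = ker S`, so `range S` is closed as well.
For `S = T₁*` and `T = T₂` this gives `range T₂` and `range T₁*`, and the closed range theorem
passes from `T₁*` to `T₁`. Finally `ker S ⊓ ker T` meets `Lᗮ` trivially. -/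

theorem cofg_orthogonal_of_finiteDimensional {𝕜 E : Type*} [RCLike 𝕜] [NormedAddCommGroup E]
    [InnerProductSpace 𝕜 E] (L : Submodule 𝕜 E) [FiniteDimensional 𝕜 L] : Lᗮ.CoFG :=
  Submodule.FG.cofg_of_isCompl L.isCompl_orthogonal (Module.Finite.iff_fg.1 inferInstance)

/-- A linear relation from `E` to `F`, such as the graph of a partially defined linear operator. -/
abbrev LinearRelation (R E F : Type*) [Semiring R] [AddCommMonoid E] [AddCommMonoid F]
    [Module R E] [Module R F] :=
  Submodule R (E × F)

namespace LinearRelation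

section Algebra

variable {R E F : Type*} [Ring R] [AddCommGroup E] [AddCommGroup F] [Module R E] [Module R F]

/-- The kernel of a linear relation, generalizing the kernel of an operator. -/
def ker (T : LinearRelation R E F) : Submodule R E :=
  T.comap (LinearMap.inl R E F)

/-- The range of a linear relation, generalizing the range of an operator. -/
def range (T : LinearRelation R E F) : Submodule R F :=
  T.map (LinearMap.snd R E F)

/-- The restriction of a linear relation to the inputs lying in `K`. -/
def restrict (T : LinearRelation R E F) (K : Submodule R E) : LinearRelation R E F :=
  T ⊓ K.comap (LinearMap.fst R E F)

theorem mem_ker {T : LinearRelation R E F} {x : E} : x ∈ T.ker ↔ (x, 0) ∈ T := Iff.rfl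

theorem mem_range {T : LinearRelation R E F} {y : F} : y ∈ T.range ↔ ∃ x, (x, y) ∈ T := by
  simp [range]

theorem mem_restrict {T : LinearRelation R E F} {K : Submodule R E} {z : E × F} :
    z ∈ T.restrict K ↔ z ∈ T ∧ z.1 ∈ K := Iff.rfl

theorem ker_graph (f : E →ₗ.[R] F) :
    ker f.graph = (LinearMap.ker f.toFun).map f.domain.subtype := by
  ext x
  simp [mem_ker]

theorem range_graph (f : E →ₗ.[R] F) : range f.graph = LinearMap.range f.toFun :=
  f.graph_map_snd_eq_range

theorem range_restrict_of_codisjoint {T : LinearRelation R E F} {K : Submodule R E}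
    (hK : Codisjoint T.ker K) : (T.restrict K).range = T.range := by
  apply le_antisymm (Submodule.map_mono inf_le_left)
  intro y hy
  obtain ⟨x, hxy⟩ := mem_range.1 hy
  obtain ⟨a, b, ha, hb, rfl⟩ := Submodule.codisjoint_iff_exists_add_eq.1 hK x
  have hby : (b, y) ∈ T := by simpa using T.sub_mem hxy (mem_ker.1 ha)
  exact mem_range.2 ⟨b, hby, hb⟩

end Algebra

section Topology

section Closed

variable {R E F : Type*} [Ring R] [AddCommGroup E] [AddCommGroup F] [Module R E] [Module R F]
  [TopologicalSpace E] [TopologicalSpace F] {T : LinearRelation R E F}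

theorem isClosed_ker (hT : IsClosed (T : Set (E × F))) : IsClosed (T.ker : Set E) :=
  hT.preimage (by fun_prop : Continuous fun x : E => (x, (0 : F)))

theorem isClosed_restrict {K : Submodule R E} (hT : IsClosed (T : Set (E × F)))
    (hK : IsClosed (K : Set E)) : IsClosed (T.restrict K : Set (E × F)) :=
  hT.inter (hK.preimage continuous_fst)

end Closed

theorem isClosed_range_of_bound {R E F : Type*} [Ring R] [SeminormedAddCommGroup E]
    [CompleteSpace E] [SeminormedAddCommGroup F] [Module R E] [Module R F]
    {T : LinearRelation R E F} (hT : IsClosed (T : Set (E × F))) (C : ℝ)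
    (hbound : ∀ x y, (x, y) ∈ T → ‖x‖ ≤ C * ‖y‖) : IsClosed (T.range : Set F) := by
  refine IsSeqClosed.isClosed fun y y₀ hy hy₀ => ?_
  choose x hx using fun n => mem_range.1 (hy n)
  have hdist (p : ℕ × ℕ) : dist (x p.1) (x p.2) ≤ C * dist (y p.1) (y p.2) := by
    rw [dist_eq_norm, dist_eq_norm]
    exact hbound _ _ (T.sub_mem (hx p.1) (hx p.2))
  have hx_cauchy : CauchySeq x := by
    rw [cauchySeq_iff_tendsto_dist_atTop_0]
    have hlim := (cauchySeq_iff_tendsto_dist_atTop_0.1 hy₀.cauchySeq).const_mul C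
    rw [mul_zero] at hlim
    exact squeeze_zero (fun _ => dist_nonneg) hdist hlim
  obtain ⟨x₀, hx₀⟩ := cauchySeq_tendsto_of_complete hx_cauchy
  exact mem_range.2 ⟨x₀, hT.mem_of_tendsto (hx₀.prodMk_nhds hy₀) (.of_forall hx)⟩

theorem isClosed_range_of_isClosed_range_restrict {𝕜 E F : Type*} [NontriviallyNormedField 𝕜]
    [CompleteSpace 𝕜] [AddCommGroup E] [Module 𝕜 E] [NormedAddCommGroup F] [NormedSpace 𝕜 F]
    {T : LinearRelation 𝕜 E F} {M : Submodule 𝕜 E} (hM : M.CoFG)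
    (hrange : IsClosed ((T.restrict M).range : Set F)) : IsClosed (T.range : Set F) := by
  let p : T →ₗ[𝕜] E ⧸ M := M.mkQ ∘ₗ LinearMap.fst 𝕜 E F ∘ₗ T.subtype
  have : (LinearMap.ker p).CoFG := Submodule.CoFG.ker p
  have hmap : (LinearMap.ker p).map (LinearMap.snd 𝕜 E F ∘ₗ T.subtype) =
      (T.restrict M).range := by
    ext y
    simp [p, mem_range, mem_restrict, and_comm]
  have hclosed := LinearMap.isClosed_range_of_isClosed_map_of_finiteDimensional_quotient
    (hmap ▸ hrange)
  rwa [LinearMap.range_comp, Submodule.range_subtype] at hclosed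

theorem exists_preimage_norm_le_of_isClosed_range {𝕜 E F : Type*} [NontriviallyNormedField 𝕜]
    [NormedAddCommGroup E] [NormedSpace 𝕜 E] [CompleteSpace E]
    [NormedAddCommGroup F] [NormedSpace 𝕜 F] [CompleteSpace F] {T : LinearRelation 𝕜 E F}
    (hT : IsClosed (T : Set (E × F))) (hrange : IsClosed (T.range : Set F)) :
    ∃ C > 0, ∀ y ∈ T.range, ∃ x, (x, y) ∈ T ∧ ‖x‖ ≤ C * ‖y‖ := by
  have : CompleteSpace T := hT.completeSpace_coe
  have : CompleteSpace T.range := hrange.completeSpace_coe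
  let π : T →L[𝕜] T.range :=
    (ContinuousLinearMap.snd 𝕜 E F ∘L T.subtypeL).codRestrict T.range fun z => mem_range.2 ⟨_, z.2⟩
  have hπ : Function.Surjective π := by
    rintro ⟨y, hy⟩
    obtain ⟨x, hxy⟩ := mem_range.1 hy
    exact ⟨⟨(x, y), hxy⟩, rfl⟩
  obtain ⟨C, hC_pos, hC⟩ := π.exists_preimage_norm_le hπ
  refine ⟨C, hC_pos, fun y hy => ?_⟩
  obtain ⟨⟨⟨x, y'⟩, hT'⟩, hπy, hnorm⟩ := hC ⟨y, hy⟩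
  obtain rfl : y' = y := congrArg Subtype.val hπy
  exact ⟨x, hT', (norm_fst_le _).trans hnorm⟩

end Topology

section Hilbert

variable {𝕜 E F G : Type*} [RCLike 𝕜]
  [NormedAddCommGroup E] [InnerProductSpace 𝕜 E]
  [NormedAddCommGroup F] [InnerProductSpace 𝕜 F]
  [NormedAddCommGroup G] [InnerProductSpace 𝕜 G]

theorem ker_adjoint (T : LinearRelation 𝕜 E F) : ker T.adjoint = T.rangeᗮ := by
  ext y
  simp [mem_ker, mem_range, Submodule.mem_orthogonal, forall_comm (α := F)]

theorem isClosed_adjoint (T : LinearRelation 𝕜 E F) : IsClosed (T.adjoint : Set (F × E)) := by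
  have hinter : (T.adjoint : Set (F × E)) =
      ⋂ p ∈ T, {z | inner 𝕜 p.2 z.1 - inner 𝕜 p.1 z.2 = 0} := by
    ext z
    simp
  rw [hinter]
  exact isClosed_biInter fun p _ => isClosed_eq (by fun_prop) continuous_const

theorem adjoint_adjoint_of_isClosed [CompleteSpace E] [CompleteSpace F]
    {T : LinearRelation 𝕜 E F} (hT : IsClosed (T : Set (E × F))) : T.adjoint.adjoint = T := by
  apply le_antisymm
  · intro z hz
    let K : Submodule 𝕜 (WithLp 2 (E × F)) := T.comap (WithLp.linearEquiv 2 𝕜 (E × F)).toLinearMap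
    have hK : IsClosed (K : Set (WithLp 2 (E × F))) :=
      hT.preimage (WithLp.prod_continuous_ofLp 2 E F)
    have : CompleteSpace K := hK.completeSpace_coe
    suffices WithLp.toLp 2 z ∈ Kᗮᗮ by rwa [Submodule.orthogonal_orthogonal] at this
    intro w hw
    have hadj : (w.snd, -w.fst) ∈ T.adjoint := by
      rw [Submodule.mem_adjoint_iff]
      intro a b hab
      have horth := hw (WithLp.toLp 2 (a, b)) hab
      rw [WithLp.prod_inner_apply] at horth
      simpa [add_comm] using horth
    have hinner := (Submodule.mem_adjoint_iff _ _).1 hz _ _ hadj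
    rw [inner_neg_left, sub_eq_zero, neg_eq_iff_add_eq_zero] at hinner
    rwa [WithLp.prod_inner_apply]
  · rintro ⟨x, y⟩ hxy
    rw [Submodule.mem_adjoint_iff]
    intro u w huw
    have hinner := (Submodule.mem_adjoint_iff _ _).1 huw x y hxy
    rw [← inner_conj_symm w, ← inner_conj_symm u, ← map_sub, ← neg_sub, hinner, neg_zero, map_zero]

theorem isClosed_range_of_isClosed_range_adjoint [CompleteSpace E] [CompleteSpace F]
    {T : LinearRelation 𝕜 E F} (hT : IsClosed (T : Set (E × F)))
    (hadj : IsClosed (range T.adjoint : Set E)) : IsClosed (T.range : Set F) := by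
  have : CompleteSpace (range T.adjoint) := hadj.completeSpace_coe
  have hker : T.ker = (range T.adjoint)ᗮ := by
    rw [← ker_adjoint, adjoint_adjoint_of_isClosed hT]
  have hcodisjoint : Codisjoint T.ker (range T.adjoint) :=
    hker ▸ (range T.adjoint).isCompl_orthogonal.symm.codisjoint
  obtain ⟨C, hC_pos, hC⟩ := exists_preimage_norm_le_of_isClosed_range (isClosed_adjoint T) hadj
  rw [← range_restrict_of_codisjoint hcodisjoint]
  refine isClosed_range_of_bound (isClosed_restrict hT hadj) C fun x y hxy => ?_
  obtain ⟨u, hux, hu⟩ := hC x hxy.2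
  have hinner : inner 𝕜 y u = inner 𝕜 x x :=
    sub_eq_zero.1 ((Submodule.mem_adjoint_iff _ _).1 hux x y hxy.1)
  have hsq : ‖x‖ * ‖x‖ ≤ ‖x‖ * (C * ‖y‖) := calc
    ‖x‖ * ‖x‖ = ‖inner 𝕜 y u‖ := by
      rw [hinner, ← inner_self_re_eq_norm, inner_self_eq_norm_mul_norm]
    _ ≤ ‖y‖ * ‖u‖ := norm_inner_le_norm y u
    _ ≤ ‖y‖ * (C * ‖x‖) := by gcongr
    _ = ‖x‖ * (C * ‖y‖) := by ring
  rcases (norm_nonneg x).eq_or_lt with hx | hx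
  · rw [← hx]
    positivity
  · exact le_of_mul_le_mul_left hsq hx

/-- The estimate `c * ‖u‖² ≤ ‖S u‖² + ‖T u‖²` for all `u ∈ K` in the domains of `S` and `T`,
stated for linear relations by letting the values `w` of `S` and `z` of `T` at `u` vary. -/
def CoerciveOn (S : LinearRelation 𝕜 E F) (T : LinearRelation 𝕜 E G) (K : Submodule 𝕜 E)
    (c : ℝ) : Prop :=
  ∀ ⦃u w z⦄, (u, w) ∈ S → (u, z) ∈ T → u ∈ K → c * ‖u‖ ^ 2 ≤ ‖w‖ ^ 2 + ‖z‖ ^ 2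

theorem CoerciveOn.symm {S : LinearRelation 𝕜 E F} {T : LinearRelation 𝕜 E G} {K : Submodule 𝕜 E}
    {c : ℝ} (h : CoerciveOn S T K c) : CoerciveOn T S K c := fun _ _ _ hT hS hK => by
  rw [add_comm]
  exact h hS hT hK

theorem coerciveOn_graph_iff {S : E →ₗ.[𝕜] F} {T : E →ₗ.[𝕜] G} {K : Submodule 𝕜 E} {c : ℝ} :
    CoerciveOn S.graph T.graph K c ↔ ∀ (u : E) (hS : u ∈ S.domain) (hT : u ∈ T.domain),
      u ∈ K → c * ‖u‖ ^ 2 ≤ ‖S ⟨u, hS⟩‖ ^ 2 + ‖T ⟨u, hT⟩‖ ^ 2 := by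
  simp only [CoerciveOn, LinearPMap.mem_graph_iff]
  constructor
  · intro h u hS hT hK
    exact h ⟨⟨u, hS⟩, rfl, rfl⟩ ⟨⟨u, hT⟩, rfl, rfl⟩ hK
  · rintro h u w z ⟨⟨_, hS⟩, rfl, rfl⟩ ⟨⟨_, hT⟩, rfl, rfl⟩ hK
    exact h _ hS hT hK

variable {S : LinearRelation 𝕜 E F} {T : LinearRelation 𝕜 E G} {L : Submodule 𝕜 E} {c : ℝ}

theorem CoerciveOn.finiteDimensional_ker_inf_ker [FiniteDimensional 𝕜 L] (hc : 0 < c)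
    (h : CoerciveOn S T Lᗮ c) : FiniteDimensional 𝕜 (S.ker ⊓ T.ker : Submodule 𝕜 E) := by
  refine .of_fg ((cofg_orthogonal_of_finiteDimensional L).fg_of_disjoint ?_)
  rw [Submodule.disjoint_def]
  rintro u ⟨hS, hT⟩ hL
  have hu : c * ‖u‖ ^ 2 ≤ 0 := by simpa using h hS hT hL
  have : ‖u‖ ^ 2 ≤ 0 := nonpos_of_mul_nonpos_right hu hc
  simpa using this

theorem CoerciveOn.isClosed_range_right [CompleteSpace E] [FiniteDimensional 𝕜 L] (hc : 0 < c)
    (h : CoerciveOn S T Lᗮ c) (hS : IsClosed (S : Set (E × F))) (hT : IsClosed (T : Set (E × G)))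
    (hker : S.kerᗮ ≤ T.ker) : IsClosed (T.range : Set G) := by
  have hS_ker : IsClosed (S.ker : Set E) := isClosed_ker hS
  have : CompleteSpace S.ker := hS_ker.completeSpace_coe
  have hcodisjoint : Codisjoint T.ker S.ker :=
    S.ker.isCompl_orthogonal.symm.codisjoint.mono_left hker
  rw [← range_restrict_of_codisjoint hcodisjoint]
  apply isClosed_range_of_isClosed_range_restrict (cofg_orthogonal_of_finiteDimensional L)
  refine isClosed_range_of_bound
    (isClosed_restrict (isClosed_restrict hT hS_ker) L.isClosed_orthogonal) (√c)⁻¹ ?_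
  rintro u z ⟨⟨huz, hu⟩, huL⟩
  have hcoercive : c * ‖u‖ ^ 2 ≤ ‖z‖ ^ 2 := by simpa using h hu huz huL
  rw [← sq_le_sq₀ (norm_nonneg u) (by positivity), mul_pow, inv_pow, Real.sq_sqrt hc.le]
  exact (le_inv_mul_iff₀ hc).2 hcoercive

theorem CoerciveOn.isClosed_range_left [CompleteSpace E] [FiniteDimensional 𝕜 L] (hc : 0 < c)
    (h : CoerciveOn S T Lᗮ c) (hS : IsClosed (S : Set (E × F))) (hT : IsClosed (T : Set (E × G)))
    (hker : S.kerᗮ ≤ T.ker) : IsClosed (S.range : Set F) := by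
  have : CompleteSpace S.ker := (isClosed_ker hS).completeSpace_coe
  refine h.symm.isClosed_range_right hc hT hS ?_
  simpa using Submodule.orthogonal_le hker

theorem orthogonal_ker_adjoint_le_ker [CompleteSpace E] {T₁ : LinearRelation 𝕜 F E}
    {T₂ : LinearRelation 𝕜 E G} (hT₂ : IsClosed (T₂ : Set (E × G))) (h : T₁.range ≤ T₂.ker) :
    (ker T₁.adjoint)ᗮ ≤ T₂.ker := by
  rw [ker_adjoint, Submodule.orthogonal_orthogonal_eq_closure]
  exact Submodule.topologicalClosure_minimal _ h (isClosed_ker hT₂)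

end Hilbert

end LinearRelation

theorem closed_ranges_of_coercive_off_finiteDimensional_general
    {𝕜 H₁ H₂ H₃ : Type*} [RCLike 𝕜]
    [NormedAddCommGroup H₁] [InnerProductSpace 𝕜 H₁] [CompleteSpace H₁]
    [NormedAddCommGroup H₂] [InnerProductSpace 𝕜 H₂] [CompleteSpace H₂]
    [NormedAddCommGroup H₃] [InnerProductSpace 𝕜 H₃]
    (T₁ : H₁ →ₗ.[𝕜] H₂) (T₂ : H₂ →ₗ.[𝕜] H₃)
    (hd₁ : Dense (T₁.domain : Set H₁)) (hc₁ : T₁.IsClosed) (hc₂ : T₂.IsClosed)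
    (hrange : LinearMap.range T₁.toFun ≤ (LinearMap.ker T₂.toFun).map T₂.domain.subtype)
    (L : Submodule 𝕜 H₂) [FiniteDimensional 𝕜 L] (c : ℝ) (hc : 0 < c)
    (hcoercive : ∀ (u : H₂) (hu₁ : u ∈ T₁.adjoint.domain) (hu₂ : u ∈ T₂.domain),
      u ∈ Lᗮ → c * ‖u‖ ^ 2 ≤ ‖T₁.adjoint ⟨u, hu₁⟩‖ ^ 2 + ‖T₂ ⟨u, hu₂⟩‖ ^ 2) :
    IsClosed (LinearMap.range T₁.toFun : Set H₂) ∧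
    IsClosed (LinearMap.range T₂.toFun : Set H₃) ∧
    FiniteDimensional 𝕜
      ((LinearMap.ker T₁.adjoint.toFun).map T₁.adjoint.domain.subtype ⊓
        (LinearMap.ker T₂.toFun).map T₂.domain.subtype : Submodule 𝕜 H₂) := by
  have hcoercive_graph := LinearRelation.coerciveOn_graph_iff.2 hcoercive
  have hadj_closed : T₁.adjoint.IsClosed := LinearPMap.adjoint_isClosed hd₁
  have hgraph := LinearPMap.adjoint_graph_eq_graph_adjoint hd₁
  rw [← LinearRelation.range_graph, ← LinearRelation.ker_graph] at hrange
  rw [← LinearRelation.range_graph, ← LinearRelation.range_graph, ← LinearRelation.ker_graph,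
    ← LinearRelation.ker_graph]
  have hker : (LinearRelation.ker T₁.adjoint.graph)ᗮ ≤ LinearRelation.ker T₂.graph :=
    hgraph ▸ LinearRelation.orthogonal_ker_adjoint_le_ker hc₂ hrange
  have hadj_range := hcoercive_graph.isClosed_range_left hc hadj_closed hc₂ hker
  exact ⟨LinearRelation.isClosed_range_of_isClosed_range_adjoint hc₁ (hgraph ▸ hadj_range),
    hcoercive_graph.isClosed_range_right hc hadj_closed hc₂ hker,
    hcoercive_graph.finiteDimensional_ker_inf_ker hc⟩

/-- If there are a finite-dimensional subspace `L ⊆ H₂` and `c > 0` with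
`‖T₁*u‖² + ‖T₂u‖² ≥ c‖u‖²` for all `u ∈ dom T₁* ∩ dom T₂` with `u ⊥ L`, then
`range T₁` and `range T₂` are closed and `ker T₁* ∩ ker T₂` is finite-dimensional. -/
theorem closed_ranges_of_coercive_off_finiteDimensional
    {H₁ H₂ H₃ : Type*}
    [NormedAddCommGroup H₁] [InnerProductSpace ℂ H₁] [CompleteSpace H₁]
    [NormedAddCommGroup H₂] [InnerProductSpace ℂ H₂] [CompleteSpace H₂]
    [NormedAddCommGroup H₃] [InnerProductSpace ℂ H₃] [CompleteSpace H₃]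
    (T₁ : H₁ →ₗ.[ℂ] H₂) (T₂ : H₂ →ₗ.[ℂ] H₃)
    (hd₁ : Dense (T₁.domain : Set H₁)) (hd₂ : Dense (T₂.domain : Set H₂))
    (hc₁ : T₁.IsClosed) (hc₂ : T₂.IsClosed)
    (hrange : LinearMap.range T₁.toFun ≤
      (LinearMap.ker T₂.toFun).map T₂.domain.subtype)
    (L : Submodule ℂ H₂) (hL : FiniteDimensional ℂ L)
    (c : ℝ) (hc : 0 < c)
    (hcoercive : ∀ (u : H₂) (hu₁ : u ∈ T₁.adjoint.domain) (hu₂ : u ∈ T₂.domain),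
      u ∈ Lᗮ → c * ‖u‖ ^ 2 ≤ ‖T₁.adjoint ⟨u, hu₁⟩‖ ^ 2 + ‖T₂ ⟨u, hu₂⟩‖ ^ 2) :
    IsClosed (LinearMap.range T₁.toFun : Set H₂) ∧
    IsClosed (LinearMap.range T₂.toFun : Set H₃) ∧
    FiniteDimensional ℂ
      ((LinearMap.ker T₁.adjoint.toFun).map T₁.adjoint.domain.subtype ⊓
        (LinearMap.ker T₂.toFun).map T₂.domain.subtype : Submodule ℂ H₂) :=
  closed_ranges_of_coercive_off_finiteDimensional_general T₁ T₂ hd₁ hc₁ hc₂ hrange L c hc hcoercive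
end

section
/- Let H be a Hilbert space, D a dense linear subspace of H, and L a finite-dimensional linear subspace of H with L ⊆ D. Then D ∩ L^⊥ is dense in the closed subspace L^⊥. -/
/-!
The orthogonal projection onto `Lᗮ` is `v ↦ v - P v`, where `P` is the orthogonal projection
onto `L`. As `L ⊆ D`, it maps `D` into `D ∩ Lᗮ`; it is continuous and fixes `Lᗮ` pointwise, so
it turns approximations in `D` of a vector of `Lᗮ` into approximations in `D ∩ Lᗮ`.
-/

open Function Set

theorem closure_inter_fixedPoints_subset_closure_of_mapsTo {X : Type*} [TopologicalSpace X]
    {f : X → X} {s t : Set X} (hf : Continuous f) (hst : MapsTo f s t) :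
    closure s ∩ fixedPoints f ⊆ closure t := by
  rintro x ⟨hxs, hfx⟩
  have hfxt : f x ∈ closure t := map_mem_closure hf hxs hst
  rwa [hfx] at hfxt

section OrthogonalProjection

variable {𝕜 H : Type*} [RCLike 𝕜] [NormedAddCommGroup H] [InnerProductSpace 𝕜 H]
  {D : AddSubgroup H} {L : Submodule 𝕜 H} [L.HasOrthogonalProjection]

theorem mapsTo_starProjection_orthogonal_inf (hLD : L.toAddSubgroup ≤ D) :
    MapsTo Lᗮ.starProjection D (D ⊓ Lᗮ.toAddSubgroup : AddSubgroup H) := by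
  intro v hv
  have hmem : Lᗮ.starProjection v ∈ D := by
    rw [Submodule.starProjection_orthogonal_val]
    exact D.sub_mem hv (hLD (L.starProjection_apply_mem v))
  exact ⟨hmem, Lᗮ.starProjection_apply_mem v⟩

theorem dense_inter_orthogonal_of_finiteDimensional_general (hLD : L.toAddSubgroup ≤ D) :
    closure (D : Set H) ∩ Lᗮ ⊆ closure (D ⊓ Lᗮ.toAddSubgroup : AddSubgroup H) := by
  have hfixed : (Lᗮ : Set H) ⊆ fixedPoints Lᗮ.starProjection :=
    fun _ hx ↦ Submodule.starProjection_eq_self_iff.mpr hx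
  calc closure (D : Set H) ∩ Lᗮ
      ⊆ closure D ∩ fixedPoints Lᗮ.starProjection := inter_subset_inter_right _ hfixed
    _ ⊆ closure (D ⊓ Lᗮ.toAddSubgroup : AddSubgroup H) :=
      closure_inter_fixedPoints_subset_closure_of_mapsTo Lᗮ.starProjection.continuous
        (mapsTo_starProjection_orthogonal_inf hLD)

end OrthogonalProjection

/-- Let `H` be a Hilbert space, `D` a dense subspace, and `L` a
finite-dimensional subspace with `L ⊆ D`. Then `D ∩ Lᗮ` is dense in the closed
subspace `Lᗮ`. -/
theorem dense_inter_orthogonal_of_finiteDimensional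
    {H : Type*} [NormedAddCommGroup H] [InnerProductSpace ℂ H] [CompleteSpace H]
    (D L : Submodule ℂ H) (hD : Dense (D : Set H)) [FiniteDimensional ℂ L]
    (hLD : L ≤ D) :
    (Lᗮ : Set H) ⊆ closure ((D ⊓ Lᗮ : Submodule ℂ H) : Set H) := by
  simpa [hD.closure_eq] using
    dense_inter_orthogonal_of_finiteDimensional_general (D := D.toAddSubgroup) hLD
end
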